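/- arXiv:2312.17224 — 3 statements merged into one kernel-verified Lean document; each statement's English description precedes it below -/
import Mathlib

section
/- For every linked pair of tableaux tuples (T^+, T^-, σ), the semi-invariant f_{T^±} lies in the ℂ-linear span of the semi-invariants f_{U^±} attached to weakly semi-standard linked pairs U^± of the same weight decomposition. -/
namespace QuiverSAGBI

/-- A finite quiver with vertices `Fin n`, arrows `Fin m`, together with a
dimension vector `r`. -/
structure QuiverData where
  n : ℕ
  m : ℕ
  asrc : Fin m → Fin n
  atgt : Fin m → Fin n
  r : Fin n → ℕ

/-- A directed path in the quiver: a nonempty list of composable arrows. -/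
structure QPath (Q : QuiverData) where
  arrows : List (Fin Q.m)
  ne : arrows ≠ []
  chain : arrows.Chain' fun a b => Q.atgt a = Q.asrc b

/-- The source vertex of a path. -/
def QPath.srcV {Q : QuiverData} (P : QPath Q) : Fin Q.n :=
  Q.asrc (P.arrows.head P.ne)

/-- The target vertex of a path. -/
def QPath.tgtV {Q : QuiverData} (P : QPath Q) : Fin Q.n :=
  Q.atgt (P.arrows.getLast P.ne)

/-- The quiver is acyclic: no directed path from a vertex to itself. -/
def IsAcyclic (Q : QuiverData) : Prop := ∀ P : QPath Q, P.srcV ≠ P.tgtV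

/-- The disjoint union of the index sets `Fin (r p)`. -/
abbrev TotalIdx (Q : QuiverData) := Σ p : Fin Q.n, Fin (Q.r p)

/-- The variable `x^a_{jk}`: the `(j,k)` entry of the generic matrix `M_a` of
size `r (tgt a) × r (src a)` attached to the arrow `a`. -/
abbrev QVar (Q : QuiverData) :=
  Σ a : Fin Q.m, Fin (Q.r (Q.atgt a)) × Fin (Q.r (Q.asrc a))

/-- The coordinate ring `ℂ[x^a_{jk}]` of `Rep(Q, r)`. -/
abbrev QPoly (Q : QuiverData) := MvPolynomial (QVar Q) ℂ

/-- The generic matrix of the arrow `a`, embedded as a block in a square matrix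
indexed by the disjoint union of all the index sets. -/
noncomputable def arrowMat (Q : QuiverData) (a : Fin Q.m) :
    Matrix (TotalIdx Q) (TotalIdx Q) (QPoly Q) :=
  Matrix.of fun v u =>
    if h : v.1 = Q.atgt a ∧ u.1 = Q.asrc a then
      MvPolynomial.X ⟨a, (Fin.cast (by rw [h.1]) v.2, Fin.cast (by rw [h.2]) u.2)⟩
    else 0

/-- The matrix `M_P` of a path: the product of the matrices of its arrows,
composed along the path (last arrow leftmost); the entry `(M_P)_{l j}` is
`pathMat Q P ⟨t(P), l⟩ ⟨s(P), j⟩`. -/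
noncomputable def pathMat (Q : QuiverData) (P : QPath Q) :
    Matrix (TotalIdx Q) (TotalIdx Q) (QPoly Q) :=
  ((P.arrows.map (arrowMat Q)).reverse).prod

/-- A label of the target tableau `T⁺_p`: a pair `(P, j)` where `P` is a path
with target `p` and `j : Fin (r (src P))`. -/
def PLabel (Q : QuiverData) (p : Fin Q.n) :=
  {x : Σ P : QPath Q, Fin (Q.r P.srcV) // x.1.tgtV = p}

/-- A label of the source tableau `T⁻_p`: a pair `(P, j)` where `P` is a path
with source `p` and `j : Fin (r (tgt P))`. -/
def MLabel (Q : QuiverData) (p : Fin Q.n) :=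
  {x : Σ P : QPath Q, Fin (Q.r P.tgtV) // x.1.srcV = p}

/-- A linked pair of tableaux tuples for the weight decomposition
`w = w⁺ - w⁻`:  for each vertex `p`, a target tableau `T⁺_p` of shape
`r p × wp p` and a source tableau `T⁻_p` of shape `r p × wm p`, together with
a bijection `link` of boxes such that the box in row `l` of `T⁺_p` labeled
`(P, j)` is sent to a box lying in row `j` of `T⁻_{s(P)}` which is labeled
`(P, l)` (rows in different `Fin` types are compared via their values). -/
structure GLinkedPair (Q : QuiverData) (wp wm : Fin Q.n → ℕ) where
  Tp : (p : Fin Q.n) → Fin (Q.r p) → Fin (wp p) → PLabel Q p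
  Tm : (p : Fin Q.n) → Fin (Q.r p) → Fin (wm p) → MLabel Q p
  link : (Σ p : Fin Q.n, Fin (Q.r p) × Fin (wp p)) ≃
    (Σ p : Fin Q.n, Fin (Q.r p) × Fin (wm p))
  link_vertex : ∀ b, (link b).1 = ((Tp b.1 b.2.1 b.2.2).1.1).srcV
  link_row : ∀ b, ((link b).2.1 : ℕ) = ((Tp b.1 b.2.1 b.2.2).1.2 : ℕ)
  link_path : ∀ b,
    (Tm (link b).1 (link b).2.1 (link b).2.2).1.1 = (Tp b.1 b.2.1 b.2.2).1.1
  link_secondEntry : ∀ b,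
    ((Tm (link b).1 (link b).2.1 (link b).2.2).1.2 : ℕ) = (b.2.1 : ℕ)

/-- `Mon(T⁺)`: the product, over all boxes of all the tableaux `T⁺_p`, of the
entry `(M_{P})_{l j}`, where the box lies in row `l` and is labeled `(P, j)`. -/
noncomputable def MonP {Q : QuiverData} {wp wm : Fin Q.n → ℕ}
    (L : GLinkedPair Q wp wm) : QPoly Q :=
  ∏ p : Fin Q.n, ∏ l : Fin (Q.r p), ∏ c : Fin (wp p),
    pathMat Q (L.Tp p l c).1.1 ⟨p, l⟩
      ⟨((L.Tp p l c).1.1).srcV, (L.Tp p l c).1.2⟩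

/-- `Mon(T⁻)`: the product, over all boxes of all the tableaux `T⁻_p`, of the
entry `(M_{P})_{l j}`, where the box lies in row `j` and is labeled `(P, l)`. -/
noncomputable def MonM {Q : QuiverData} {wp wm : Fin Q.n → ℕ}
    (L : GLinkedPair Q wp wm) : QPoly Q :=
  ∏ p : Fin Q.n, ∏ j : Fin (Q.r p), ∏ c : Fin (wm p),
    pathMat Q (L.Tm p j c).1.1
      ⟨((L.Tm p j c).1.1).tgtV, (L.Tm p j c).1.2⟩ ⟨p, j⟩

/-- The semi-invariant attached to a linked pair, generalized by an arbitrary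
relabeling map `σb` on the boxes of `T⁺` (the identity giving `f_{T^±}`):
`∑_{α⁻,α⁺} sign(α⁻) sign(α⁺) Mon(α⁻ · α⁺ · (σb · T⁺))`, where the `c`-th copy
of `Sym (r p)` in `G⁺` permutes the entries of the `c`-th column of `T⁺_p`
among its rows, and the `c`-th copy of `Sym (r q)` in `G⁻` permutes the second
entries of the labels of the boxes of `T⁺` linked to the `c`-th column
of `T⁻_q`. -/
noncomputable def semiInvGen {Q : QuiverData} {wp wm : Fin Q.n → ℕ}
    (L : GLinkedPair Q wp wm)
    (σb : (Σ p : Fin Q.n, Fin (Q.r p) × Fin (wp p)) →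
      (Σ p : Fin Q.n, Fin (Q.r p) × Fin (wp p))) : QPoly Q :=
  ∑ αm : (p : Fin Q.n) → Fin (wm p) → Equiv.Perm (Fin (Q.r p)),
    ∑ αp : (p : Fin Q.n) → Fin (wp p) → Equiv.Perm (Fin (Q.r p)),
      ((∏ p, ∏ c, (Equiv.Perm.sign (αm p c) : ℤ)) *
        ∏ p, ∏ c, (Equiv.Perm.sign (αp p c) : ℤ)) •
        ∏ p : Fin Q.n, ∏ l : Fin (Q.r p), ∏ c : Fin (wp p),
          pathMat Q
            (L.Tp (σb ⟨p, (l, c)⟩).1 (σb ⟨p, (l, c)⟩).2.1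
              (σb ⟨p, (l, c)⟩).2.2).1.1
            ⟨p, αp p c l⟩
            ⟨(L.link (σb ⟨p, (l, c)⟩)).1,
              αm (L.link (σb ⟨p, (l, c)⟩)).1 (L.link (σb ⟨p, (l, c)⟩)).2.2
                ((L.link (σb ⟨p, (l, c)⟩)).2.1)⟩

/-- The substitution action of a tuple of matrices `g` on the coordinate ring:
`M_a ↦ (g (tgt a))⁻¹ * M_a * g (src a)`. -/
noncomputable def quivAct {Q : QuiverData}
    (g : (p : Fin Q.n) → Matrix (Fin (Q.r p)) (Fin (Q.r p)) ℂ) :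
    QPoly Q →ₐ[ℂ] QPoly Q :=
  MvPolynomial.aeval fun v : QVar Q =>
    ∑ j' : Fin (Q.r (Q.atgt v.1)), ∑ k' : Fin (Q.r (Q.asrc v.1)),
      MvPolynomial.C ((g (Q.atgt v.1))⁻¹ v.2.1 j' * g (Q.asrc v.1) k' v.2.2) *
        MvPolynomial.X ⟨v.1, (j', k')⟩

/-- `f` is a semi-invariant of weight `w : Fin Q.n → ℤ` for the action of
`GL(r) = ∏ p, GL(r p, ℂ)`. -/
def IsQSemiInvariant {Q : QuiverData} (f : QPoly Q) (w : Fin Q.n → ℤ) : Prop :=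
  ∀ g : (p : Fin Q.n) → Matrix (Fin (Q.r p)) (Fin (Q.r p)) ℂ,
    (∀ p, IsUnit (g p).det) →
      quivAct g f = MvPolynomial.C (∏ p, (g p).det ^ w p) * f

/-- A linked pair is weakly semi-standard (with respect to an enumeration
`idx` of the paths of `Q`): in each tableau of `T⁺` and of `T⁻`, the first
entries of the labels are weakly increasing along each row and weakly
increasing down each column. -/
def IsWeaklySemiStandard {Q : QuiverData} {wp wm : Fin Q.n → ℕ}
    (idx : QPath Q → ℕ) (L : GLinkedPair Q wp wm) : Prop :=
  (∀ (p : Fin Q.n) (l : Fin (Q.r p)) (c c' : Fin (wp p)), c ≤ c' →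
    idx (L.Tp p l c).1.1 ≤ idx (L.Tp p l c').1.1) ∧
  (∀ (p : Fin Q.n) (c : Fin (wp p)) (l l' : Fin (Q.r p)), l ≤ l' →
    idx (L.Tp p l c).1.1 ≤ idx (L.Tp p l' c).1.1) ∧
  (∀ (p : Fin Q.n) (l : Fin (Q.r p)) (c c' : Fin (wm p)), c ≤ c' →
    idx (L.Tm p l c).1.1 ≤ idx (L.Tm p l c').1.1) ∧
  (∀ (p : Fin Q.n) (c : Fin (wm p)) (l l' : Fin (Q.r p)), l ≤ l' →
    idx (L.Tm p l c).1.1 ≤ idx (L.Tm p l' c).1.1)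

theorem hgg_aux {ι : Type*} [Fintype ι] [DecidableEq ι] {β : ι → Type*}
    [∀ i, Fintype (β i)] [∀ i, DecidableEq (β i)] (i : ι) (a b : β i) :
    Equiv.Perm.sigmaCongrRight (Pi.mulSingle i (Equiv.swap a b)) =
      Equiv.swap (⟨i, a⟩ : Σ i, β i) ⟨i, b⟩ := by
  ext1 ⟨j, x⟩
  by_cases hj : j = i
  · subst hj
    simp only [Equiv.Perm.sigmaCongrRight, Equiv.sigmaCongrRight_apply, Pi.mulSingle_eq_same,
      Equiv.swap_apply_def]
    simp only [Sigma.mk.injEq, heq_eq_eq, true_and]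
    split_ifs <;> rfl
  · rw [Equiv.swap_apply_of_ne_of_ne]
    · simp [Equiv.Perm.sigmaCongrRight, Pi.mulSingle_eq_of_ne hj]
    · intro h; exact hj (congrArg Sigma.fst h)
    · intro h; exact hj (congrArg Sigma.fst h)
/-- The boxes of a tuple of rectangular tableaux. -/
abbrev Bx {n : ℕ} (r w : Fin n → ℕ) := Σ p : Fin n, Fin (r p) × Fin (w p)

/-- Tuples of column permutations. -/
abbrev Fam {n : ℕ} (r w : Fin n → ℕ) :=
  (p : Fin n) → Fin (w p) → Equiv.Perm (Fin (r p))

/-- The sign of a tuple of column permutations. -/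
def fsign {n : ℕ} {r w : Fin n → ℕ} (κ : Fam r w) : ℤ :=
  ∏ p, ∏ c, (Equiv.Perm.sign (κ p c) : ℤ)

/-- The value of a tuple of column permutations at a box. -/
def act {n : ℕ} {r w : Fin n → ℕ} (κ : Fam r w) (b : Bx r w) : Σ p : Fin n, Fin (r p) :=
  ⟨b.1, κ b.1 b.2.2 b.2.1⟩

/-- A tuple of column permutations as a permutation of the boxes. -/
def colPerm {n : ℕ} {r w : Fin n → ℕ} (κ : Fam r w) : Equiv.Perm (Bx r w) :=
  Equiv.Perm.sigmaCongrRight (fun p => Equiv.prodCongrLeft (κ p))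

theorem colPerm_apply {n : ℕ} {r w : Fin n → ℕ} (κ : Fam r w) (b : Bx r w) :
    colPerm κ b = ⟨b.1, (κ b.1 b.2.2 b.2.1, b.2.2)⟩ := rfl

theorem sign_sigma {ι : Type*} [Fintype ι] [DecidableEq ι] {β : ι → Type*}
    [∀ i, Fintype (β i)] [∀ i, DecidableEq (β i)] (σ : ∀ i, Equiv.Perm (β i)) :
    Equiv.Perm.sign (Equiv.Perm.sigmaCongrRight σ) = ∏ i, Equiv.Perm.sign (σ i) := by
  let f : (∀ i, Equiv.Perm (β i)) →* ℤˣ :=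
    Equiv.Perm.sign.comp (Equiv.Perm.sigmaCongrRightHom β)
  let g : (∀ i, Equiv.Perm (β i)) →* ℤˣ :=
    { toFun := fun σ => ∏ i, Equiv.Perm.sign (σ i)
      map_one' := by simp
      map_mul' := by intro a b; simp [Finset.prod_mul_distrib] }
  have hfg : f = g := by
    apply MonoidHom.pi_ext
    intro i x
    have hg : g (Pi.mulSingle i x) = Equiv.Perm.sign x := by
      change ∏ j, Equiv.Perm.sign ((Pi.mulSingle i x : ∀ i, Equiv.Perm (β i)) j) = _
      rw [Finset.prod_eq_single i]
      · simp
      · intro j _ hj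
        simp [Pi.mulSingle_eq_of_ne hj]
      · simp
    rw [hg]
    clear hg
    induction x using Equiv.Perm.swap_induction_on with
    | one => simp
    | swap_mul x a b hab ih =>
      rw [Pi.mulSingle_mul, map_mul, ih]
      have : f (Pi.mulSingle i (Equiv.swap a b)) = -1 := by
        change Equiv.Perm.sign (Equiv.Perm.sigmaCongrRight (Pi.mulSingle i (Equiv.swap a b))) = _
        rw [hgg_aux, Equiv.Perm.sign_swap]
        intro h
        exact hab (eq_of_heq (Sigma.mk.inj h).2)
      rw [this]
      simp [hab]
  exact DFunLike.congr_fun hfg σ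

theorem sign_colPerm {n : ℕ} {r w : Fin n → ℕ} (κ : Fam r w) :
    (Equiv.Perm.sign (colPerm κ) : ℤ) = fsign κ := by
  unfold colPerm fsign
  rw [sign_sigma]
  simp [Equiv.Perm.sign_prodCongrLeft]

/-- A permutation of the boxes preserving vertices and columns comes from a tuple of
column permutations. -/
theorem exists_colPerm {n : ℕ} {r w : Fin n → ℕ} (τ : Equiv.Perm (Bx r w))
    (h : ∀ b, ∃ l, τ b = ⟨b.1, (l, b.2.2)⟩) : ∃ κ : Fam r w, τ = colPerm κ := by
  choose f hf using h
  have hinj : ∀ (p : Fin n) (c : Fin (w p)),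
      Function.Injective (β := Fin (r p)) (fun l : Fin (r p) => f ⟨p, (l, c)⟩) := by
    intro p c l l' hl
    have h1 := hf ⟨p, (l, c)⟩
    have h2 := hf ⟨p, (l', c)⟩
    simp only at hl h1 h2
    rw [hl, ← h2] at h1
    have h3 := τ.injective h1
    simpa using h3
  refine ⟨fun p c => Equiv.ofBijective _ (Finite.injective_iff_bijective.1 (hinj p c)), ?_⟩
  ext1 ⟨p, l, c⟩
  rw [hf, colPerm_apply]
  rfl

/-- The generalized products of determinants. -/
noncomputable def FF {n : ℕ} {r w : Fin n → ℕ} {R : Type*} [CommRing R] {ι : Type*} [Fintype ι]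
    (co : ι → ℤ) (m : ι → (Σ p : Fin n, Fin (r p)) → Bx r w → R)
    (π : Equiv.Perm (Bx r w)) : R :=
  ∑ i, co i • ∑ α : Fam r w, fsign α • ∏ b, m i (act α b) (π b)

section
variable {n : ℕ} {r w : Fin n → ℕ} {R : Type*} [CommRing R] {ι : Type*} [Fintype ι]
    (co : ι → ℤ) (m : ι → (Σ p : Fin n, Fin (r p)) → Bx r w → R)

theorem fsign_mul (κ α : Fam r w) : fsign (α * κ) = fsign α * fsign κ := by
  simp [fsign, Finset.prod_mul_distrib]

theorem fsign_sq (κ : Fam r w) : fsign κ * fsign κ = 1 := by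
  rw [← sign_colPerm]
  simp [← Units.val_mul]

theorem act_mul (κ α : Fam r w) (b : Bx r w) : act (α * κ) b = act α (colPerm κ b) := rfl

theorem FF_col (π : Equiv.Perm (Bx r w)) (κ : Fam r w) :
    fsign κ • FF co m (π * colPerm κ) = FF co m π := by
  unfold FF
  rw [Finset.smul_sum]
  refine Finset.sum_congr rfl fun i _ => ?_
  rw [smul_comm]
  congr 1
  rw [Finset.smul_sum, ← Equiv.sum_comp (Equiv.mulRight κ)]
  refine Finset.sum_congr rfl fun α _ => ?_
  simp only [Equiv.coe_mulRight]
  rw [smul_smul, fsign_mul, mul_comm, mul_assoc, fsign_sq, mul_one]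
  congr 1
  rw [← Equiv.prod_comp (colPerm κ) (fun b => m i (act α b) (π b))]
  rfl

theorem FF_garnir (π : Equiv.Perm (Bx r w))
    (A : Bx r w → Prop)
    (hA : ∀ α : Fam r w, ∃ b b', A b ∧ A b' ∧ b ≠ b' ∧ act α b = act α b')
    (G : Finset (Equiv.Perm (Bx r w)))
    (hG : ∀ τ, τ ∈ G ↔ ∀ b, ¬ A b → τ b = b) :
    ∑ τ ∈ G, (Equiv.Perm.sign τ : ℤ) • FF co m (π * τ) = 0 := by
  have key : ∀ i (α : Fam r w), ∑ τ ∈ G, (Equiv.Perm.sign τ : ℤ) •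
      ∏ b, m i (act α b) ((π * τ) b) = 0 := by
    intro i α
    obtain ⟨b₁, b₂, h1, h2, hne, he⟩ := hA α
    refine Finset.sum_involution (fun τ _ => τ * Equiv.swap b₁ b₂) ?_ ?_ ?_ ?_
    · intro τ _
      have : ∏ b, m i (act α b) ((π * (τ * Equiv.swap b₁ b₂)) b)
          = ∏ b, m i (act α b) ((π * τ) b) := by
        rw [← Equiv.prod_comp (Equiv.swap b₁ b₂) (fun b => m i (act α b) ((π * τ) b))]
        refine Finset.prod_congr rfl fun b _ => ?_
        have : act α (Equiv.swap b₁ b₂ b) = act α b := by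
          rw [Equiv.swap_apply_def]
          split_ifs with h h'
          · rw [h, he]
          · rw [h', he]
          · rfl
        rw [this]
        rfl
      rw [this]
      simp [Equiv.Perm.sign_swap hne]
    · intro τ _ _ h
      have := congrArg (fun f => f b₁) h
      simp at this
      exact hne this.symm
    · intro τ hτ
      rw [hG] at hτ ⊢
      intro b hb
      rw [Equiv.Perm.mul_apply, Equiv.swap_apply_of_ne_of_ne, hτ b hb]
      · rintro rfl; exact hb h1
      · rintro rfl; exact hb h2
    · intro τ _
      simp [mul_assoc]
  unfold FF
  simp only [Finset.smul_sum]
  rw [Finset.sum_comm]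
  refine Finset.sum_eq_zero fun i _ => ?_
  rw [Finset.sum_comm]
  refine Finset.sum_eq_zero fun α _ => ?_
  have := congrArg (fun x => co i • fsign α • x) (key i α)
  simp only [smul_zero, Finset.smul_sum] at this
  rw [← this]
  refine Finset.sum_congr rfl fun τ _ => ?_
  simp only [smul_smul]
  congr 1
  ring

/-- The termination measure. -/
def mu (h : Bx r w → ℤ) : ℤ := ∑ b, (b.2.2 : ℤ) * h b

theorem mu_col (h : Bx r w → ℤ) (κ : Fam r w) : mu (fun b => h (colPerm κ b)) = mu h := by
  unfold mu
  rw [← Equiv.sum_comp (colPerm κ) (fun b => (b.2.2 : ℤ) * h b)]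
  rfl

theorem mu_lt (h : Bx r w → ℤ) (τ : Equiv.Perm (Bx r w)) (t : ℤ)
    (h0 : ∀ b, 0 ≤ ((b.2.2 : ℤ) - ((τ b).2.2 : ℤ)) * (2 * h (τ b) - t))
    (h1 : ∃ b, 0 < ((b.2.2 : ℤ) - ((τ b).2.2 : ℤ)) * (2 * h (τ b) - t)) :
    mu h < mu (fun b => h (τ b)) := by
  have hp : 0 < ∑ b, ((b.2.2 : ℤ) - ((τ b).2.2 : ℤ)) * (2 * h (τ b) - t) := by
    obtain ⟨b, hb⟩ := h1
    exact Finset.sum_pos' (fun b _ => h0 b) ⟨b, Finset.mem_univ b, hb⟩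
  have e1 : ∑ b, ((τ b).2.2 : ℤ) * h (τ b) = mu h :=
    Equiv.sum_comp τ (fun b => (b.2.2 : ℤ) * h b)
  have e2 : ∑ b, ((τ b).2.2 : ℤ) = ∑ b : Bx r w, (b.2.2 : ℤ) :=
    Equiv.sum_comp τ (fun b => (b.2.2 : ℤ))
  have e3 : ∑ b, ((b.2.2 : ℤ) - ((τ b).2.2 : ℤ)) * (2 * h (τ b) - t)
      = 2 * (mu (fun b => h (τ b)) - mu h) := by
    have : ∀ b : Bx r w, ((b.2.2 : ℤ) - ((τ b).2.2 : ℤ)) * (2 * h (τ b) - t)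
      = 2 * ((b.2.2 : ℤ) * h (τ b)) - 2 * (((τ b).2.2 : ℤ) * h (τ b))
        - t * (b.2.2 : ℤ) + t * ((τ b).2.2 : ℤ) := by intro b; ring
    simp only [this, Finset.sum_add_distrib, Finset.sum_sub_distrib, ← Finset.mul_sum, e1, e2]
    unfold mu
    ring
  rw [e3] at hp
  linarith

/-- Rows and columns weakly increasing. -/
def Std (g : Bx r w → ℕ) : Prop :=
  (∀ p l c c', c ≤ c' → g ⟨p, (l, c)⟩ ≤ g ⟨p, (l, c')⟩) ∧
  (∀ p c l l', l ≤ l' → g ⟨p, (l, c)⟩ ≤ g ⟨p, (l', c)⟩)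

/-- The abstract straightening theorem. -/
theorem straighten [Algebra ℂ R] (g : Bx r w → ℕ)
    (π : Equiv.Perm (Bx r w)) (hπ : ∀ b, (π b).1 = b.1) :
    FF co m π ∈ Submodule.span ℂ {f : R | ∃ π' : Equiv.Perm (Bx r w),
      (∀ b, (π' b).1 = b.1) ∧ Std (fun b => g (π' b)) ∧ f = FF co m π'} := by
  classical
  set N := Submodule.span ℂ {f : R | ∃ π' : Equiv.Perm (Bx r w),
      (∀ b, (π' b).1 = b.1) ∧ Std (fun b => g (π' b)) ∧ f = FF co m π'} with hN
  let M : Equiv.Perm (Bx r w) → ℤ := fun π => mu (fun b => (g (π b) : ℤ))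
  have hwf : WellFounded (fun π π' => M π > M π') := by
    have : IsTrans (Equiv.Perm (Bx r w)) (fun π π' => M π > M π') :=
      ⟨fun a b c h1 h2 => lt_trans h2 h1⟩
    have : Std.Irrefl (fun π π' : Equiv.Perm (Bx r w) => M π > M π') :=
      ⟨fun a h => lt_irrefl _ h⟩
    exact Finite.wellFounded_of_trans_of_irrefl _
  induction π using hwf.induction with
  | _ π ih =>
  -- sort the columns
  let κ : Fam r w := fun p c => Tuple.sort (fun l => g (π ⟨p, (l, c)⟩))
  have hcols : ∀ p c l l', l ≤ l' →
      g ((π * colPerm κ) ⟨p, (l, c)⟩) ≤ g ((π * colPerm κ) ⟨p, (l', c)⟩) := by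
    intro p c l l' hl
    exact Tuple.monotone_sort (fun l => g (π ⟨p, (l, c)⟩)) hl
  have hMκ : M (π * colPerm κ) = M π := mu_col (fun b => (g (π b) : ℤ)) κ
  have hπ1 : ∀ b, ((π * colPerm κ) b).1 = b.1 := by
    intro b
    rw [Equiv.Perm.mul_apply, hπ, colPerm_apply]
  rw [← FF_col co m π κ]
  refine zsmul_mem ?_ _
  generalize π * colPerm κ = ρ at hcols hMκ hπ1
  by_cases hrow : ∀ p l c c', c ≤ c' → g (ρ ⟨p, (l, c)⟩) ≤ g (ρ ⟨p, (l, c')⟩)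
  · exact Submodule.subset_span ⟨ρ, hπ1, ⟨hrow, hcols⟩, rfl⟩
  push Not at hrow
  obtain ⟨p, l, c, c', hcc, hlt⟩ := hrow
  have hc : c < c' := by
    rcases hcc.lt_or_eq with h | h
    · exact h
    · subst h; exact absurd hlt (lt_irrefl _)
  let A : Bx r w → Prop := fun b =>
    (∃ l', l ≤ l' ∧ b = ⟨p, (l', c)⟩) ∨ (∃ l', l' ≤ l ∧ b = ⟨p, (l', c')⟩)
  have hA : ∀ α : Fam r w, ∃ b b', A b ∧ A b' ∧ b ≠ b' ∧ act α b = act α b' := by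
    intro α
    have hnd : ¬ Disjoint ((Finset.Ici l).image (α p c)) ((Finset.Iic l).image (α p c')) := by
      intro hd
      have h1 := Finset.card_union_of_disjoint hd
      rw [Finset.card_image_of_injective _ (α p c).injective,
        Finset.card_image_of_injective _ (α p c').injective, Fin.card_Ici, Fin.card_Iic] at h1
      have h2 := Finset.card_le_univ ((Finset.Ici l).image (α p c) ∪ (Finset.Iic l).image (α p c'))
      rw [Fintype.card_fin] at h2
      have := l.2
      omega
    rw [Finset.not_disjoint_iff] at hnd
    obtain ⟨x, hx1, hx2⟩ := hnd
    obtain ⟨l1, hl1, e1⟩ := Finset.mem_image.1 hx1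
    obtain ⟨l2, hl2, e2⟩ := Finset.mem_image.1 hx2
    refine ⟨⟨p, (l1, c)⟩, ⟨p, (l2, c')⟩, Or.inl ⟨l1, by simpa using hl1, rfl⟩,
      Or.inr ⟨l2, by simpa using hl2, rfl⟩, ?_, ?_⟩
    · intro h
      simp at h
      exact hc.ne h.2
    · simp [act, e1, e2]
  let G : Finset (Equiv.Perm (Bx r w)) := Finset.univ.filter fun τ => ∀ b, ¬ A b → τ b = b
  have hG : ∀ τ, τ ∈ G ↔ ∀ b, ¬ A b → τ b = b := by intro τ; simp [G]
  have hgar := FF_garnir co m ρ A hA G hG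
  have hGA : ∀ τ ∈ G, ∀ b, A b → A (τ b) := by
    intro τ hτ b hb
    by_contra hn
    have h1 := (hG τ).1 hτ _ hn
    have h2 := τ.injective h1
    rw [h2] at hn
    exact hn hb
  have hA1 : ∀ b, A b → b.1 = p := by
    rintro b (⟨l', _, rfl⟩ | ⟨l', _, rfl⟩) <;> rfl
  have hGv : ∀ τ ∈ G, ∀ b, (τ b).1 = b.1 := by
    intro τ hτ b
    by_cases hb : A b
    · rw [hA1 _ hb, hA1 _ (hGA τ hτ b hb)]
    · rw [(hG τ).1 hτ b hb]
  let S : Equiv.Perm (Bx r w) → Prop := fun τ => ∀ b, ((τ b).2.2 : ℕ) = (b.2.2 : ℕ)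
  have hS : ∀ τ ∈ G.filter S, (Equiv.Perm.sign τ : ℤ) • FF co m (ρ * τ) = FF co m ρ := by
    intro τ hτ
    rw [Finset.mem_filter] at hτ
    obtain ⟨κ', rfl⟩ := exists_colPerm τ (by
      intro b
      have h1 := hGv τ hτ.1 b
      have h2 := hτ.2 b
      revert h1 h2
      obtain ⟨p1, l1, c1⟩ := b
      generalize τ ⟨p1, (l1, c1)⟩ = y
      obtain ⟨p2, l2, c2⟩ := y
      intro h1 h2
      simp only at h1
      subst h1
      exact ⟨l2, by simpa [Fin.ext_iff] using h2⟩)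
    rw [sign_colPerm, FF_col]
  have hns : ∀ τ ∈ G.filter (fun τ => ¬ S τ), (Equiv.Perm.sign τ : ℤ) • FF co m (ρ * τ) ∈ N := by
    intro τ hτ
    rw [Finset.mem_filter] at hτ
    refine zsmul_mem (ih (ρ * τ) ?_ ?_) _
    · change M π < M (ρ * τ)
      rw [← hMκ]
      have hmain : ∀ b, ((τ b).2.2 : ℕ) = (b.2.2 : ℕ) ∨
          0 < ((b.2.2 : ℤ) - ((τ b).2.2 : ℤ)) * (2 * (g (ρ (τ b)) : ℤ) -
            (g (ρ ⟨p, (l, c)⟩) + g (ρ ⟨p, (l, c')⟩))) := by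
        intro b
        by_cases hb : A b
        · have hb' := hGA τ hτ.1 b hb
          have hcv : ((c : ℕ) : ℤ) < ((c' : ℕ) : ℤ) := by exact_mod_cast hc
          have hltz : (g (ρ ⟨p, (l, c')⟩) : ℤ) < (g (ρ ⟨p, (l, c)⟩) : ℤ) := by exact_mod_cast hlt
          rcases hb with ⟨l1, hl1, e1⟩ | ⟨l1, hl1, e1⟩ <;>
          rcases hb' with ⟨l2, hl2, e2⟩ | ⟨l2, hl2, e2⟩
          · left; rw [e2, e1]
          · right
            rw [e2, e1]
            have : (g (ρ ⟨p, (l2, c')⟩) : ℤ) ≤ (g (ρ ⟨p, (l, c')⟩) : ℤ) := by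
              exact_mod_cast hcols p c' l2 l hl2
            exact mul_pos_of_neg_of_neg (by simpa using hc) (by linarith)
          · right
            rw [e2, e1]
            have : (g (ρ ⟨p, (l, c)⟩) : ℤ) ≤ (g (ρ ⟨p, (l2, c)⟩) : ℤ) := by
              exact_mod_cast hcols p c l l2 hl2
            exact mul_pos (by simpa using hc) (by linarith)
          · left; rw [e2, e1]
        · left
          rw [(hG τ).1 hτ.1 b hb]
      refine mu_lt (fun b => (g (ρ b) : ℤ)) τ (g (ρ ⟨p, (l, c)⟩) + g (ρ ⟨p, (l, c')⟩)) ?_ ?_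
      · intro b
        rcases hmain b with h | h
        · rw [h]; simp
        · exact h.le
      · have hnS := hτ.2
        simp only [S] at hnS
        push Not at hnS
        obtain ⟨b, hb⟩ := hnS
        exact ⟨b, (hmain b).resolve_left hb⟩
    · intro b
      rw [Equiv.Perm.mul_apply, hπ1, hGv τ hτ.1]
  rw [← Finset.sum_filter_add_sum_filter_not G S, Finset.sum_congr rfl hS, Finset.sum_const] at hgar
  have hk : (G.filter S).card ≠ 0 := by
    apply Finset.card_ne_zero_of_mem (a := 1)
    rw [Finset.mem_filter, hG]
    exact ⟨fun b _ => rfl, fun b => rfl⟩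
  have hmem : (G.filter S).card • FF co m ρ ∈ N := by
    rw [eq_neg_of_add_eq_zero_left hgar]
    exact neg_mem (sum_mem hns)
  rw [← Nat.cast_smul_eq_nsmul ℂ] at hmem
  exact (Submodule.smul_mem_iff _ (Nat.cast_ne_zero.2 hk)).1 hmem
end

/-- The path labelling a box of the target tableaux. -/
def pth {Q : QuiverData} {wp wm : Fin Q.n → ℕ} (L : GLinkedPair Q wp wm)
    (b : Bx Q.r wp) : QPath Q := (L.Tp b.1 b.2.1 b.2.2).1.1

/-- A linked pair from a labelling of boxes by paths and a link. -/
def mkPair {Q : QuiverData} {wp wm : Fin Q.n → ℕ} (P : Bx Q.r wp → QPath Q)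
    (e : Bx Q.r wp ≃ Bx Q.r wm) (ht : ∀ b, (P b).tgtV = b.1)
    (hs : ∀ b, (e b).1 = (P b).srcV) : GLinkedPair Q wp wm where
  Tp p l c := ⟨⟨P ⟨p, (l, c)⟩, Fin.cast (by rw [hs]) (e ⟨p, (l, c)⟩).2.1⟩, ht _⟩
  Tm q l c := ⟨⟨P (e.symm ⟨q, (l, c)⟩),
    Fin.cast (by rw [ht]) (e.symm ⟨q, (l, c)⟩).2.1⟩, by rw [← hs]; simp⟩
  link := e
  link_vertex := hs
  link_row _ := rfl
  link_path b := by
    change P (e.symm (e b)) = P b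
    simp
  link_secondEntry b := by
    exact congrArg (fun x : Bx Q.r wp => (x.2.1 : ℕ)) (e.symm_apply_apply b)

theorem semiInv_eq {Q : QuiverData} {wp wm : Fin Q.n → ℕ} (L : GLinkedPair Q wp wm) :
    semiInvGen L id = ∑ αm : Fam Q.r wm, ∑ αp : Fam Q.r wp, (fsign αm * fsign αp) •
      ∏ b, pathMat Q (pth L b) (act αp b) (act αm (L.link b)) := by
  unfold semiInvGen
  refine Finset.sum_congr rfl fun αm _ => Finset.sum_congr rfl fun αp _ => ?_
  rw [Fintype.prod_sigma]
  simp only [Fintype.prod_prod_type]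
  rfl

theorem pth_tgt {Q : QuiverData} {wp wm : Fin Q.n → ℕ} (L : GLinkedPair Q wp wm)
    (b : Bx Q.r wp) : (pth L b).tgtV = b.1 := (L.Tp b.1 b.2.1 b.2.2).2

theorem Tm_path {Q : QuiverData} {wp wm : Fin Q.n → ℕ} (L : GLinkedPair Q wp wm)
    (b : Bx Q.r wm) : (L.Tm b.1 b.2.1 b.2.2).1.1 = pth L (L.link.symm b) := by
  have := L.link_path (L.link.symm b)
  rw [L.link.apply_symm_apply] at this
  exact this

theorem plusStep {Q : QuiverData} {wp wm : Fin Q.n → ℕ} (idx : QPath Q → ℕ)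
    (L : GLinkedPair Q wp wm) :
    semiInvGen L id ∈ Submodule.span ℂ
      {f : QPoly Q | ∃ U : GLinkedPair Q wp wm,
        Std (fun b => idx (pth U b)) ∧ f = semiInvGen U id} := by
  let m : Fam Q.r wm → (Σ p, Fin (Q.r p)) → Bx Q.r wp → QPoly Q :=
    fun αm x b => pathMat Q (pth L b) x (act αm (L.link b))
  have hF : ∀ (π : Equiv.Perm (Bx Q.r wp)) (U : GLinkedPair Q wp wm),
      (∀ b, pth U b = pth L (π b)) → (∀ b, U.link b = L.link (π b)) →
      FF (fun αm : Fam Q.r wm => fsign αm) m π = semiInvGen U id := by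
    intro π U h1 h2
    rw [semiInv_eq]
    unfold FF
    refine Finset.sum_congr rfl fun αm _ => ?_
    rw [Finset.smul_sum]
    refine Finset.sum_congr rfl fun αp _ => ?_
    rw [smul_smul]
    simp only [h1, h2, m]
  have hst := straighten (fun αm : Fam Q.r wm => fsign αm) m (fun b => idx (pth L b)) 1
    (fun b => rfl)
  rw [hF 1 L (fun _ => rfl) (fun _ => rfl)] at hst
  refine Submodule.span_mono ?_ hst
  rintro f ⟨π, hv, hs, rfl⟩
  refine ⟨mkPair (fun b => pth L (π b)) (π.trans L.link)
    (fun b => by rw [pth_tgt, hv]) (fun b => L.link_vertex (π b)), hs, ?_⟩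
  exact hF π _ (fun _ => rfl) (fun _ => rfl)

theorem minusStep {Q : QuiverData} {wp wm : Fin Q.n → ℕ} (idx : QPath Q → ℕ)
    (L : GLinkedPair Q wp wm) (hL : Std (fun b => idx (pth L b))) :
    semiInvGen L id ∈ Submodule.span ℂ
      {f : QPoly Q | ∃ U : GLinkedPair Q wp wm,
        IsWeaklySemiStandard idx U ∧ f = semiInvGen U id} := by
  let m : Fam Q.r wp → (Σ p, Fin (Q.r p)) → Bx Q.r wm → QPoly Q :=
    fun αp x b => pathMat Q (pth L (L.link.symm b)) (act αp (L.link.symm b)) x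
  have hF : ∀ (π : Equiv.Perm (Bx Q.r wm)) (U : GLinkedPair Q wp wm),
      (∀ b, pth U b = pth L b) → (∀ b, U.link.symm b = L.link.symm (π b)) →
      FF (fun αp : Fam Q.r wp => fsign αp) m π = semiInvGen U id := by
    intro π U h1 h2
    rw [semiInv_eq, Finset.sum_comm]
    unfold FF
    refine Finset.sum_congr rfl fun αp _ => ?_
    rw [Finset.smul_sum]
    refine Finset.sum_congr rfl fun αm _ => ?_
    rw [smul_smul, mul_comm, ← Equiv.prod_comp U.link.symm]
    simp only [h1, h2, m]
    congr 1
    refine Finset.prod_congr rfl fun b _ => ?_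
    rw [← h2, U.link.apply_symm_apply]
  have hst := straighten (fun αp : Fam Q.r wp => fsign αp) m
    (fun b => idx (pth L (L.link.symm b))) 1 (fun b => rfl)
  rw [hF 1 L (fun _ => rfl) (fun _ => rfl)] at hst
  refine Submodule.span_mono ?_ hst
  rintro f ⟨π, hv, hs, rfl⟩
  have hv' : ∀ b, (π.symm b).1 = b.1 := by
    intro b
    rw [← hv, Equiv.apply_symm_apply]
  refine ⟨mkPair (fun b => pth L b) (L.link.trans π.symm)
    (fun b => pth_tgt L b) (fun b => (hv' _).trans (L.link_vertex b)), ?_, ?_⟩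
  · exact ⟨hL.1, hL.2, hs.1, hs.2⟩
  · exact hF π _ (fun _ => rfl) (fun _ => rfl)

/-- For every linked pair of tableaux tuples, the
semi-invariant `f_{T^±}` lies in the `ℂ`-linear span of the semi-invariants
attached to weakly semi-standard linked pairs of the same weight
decomposition (for any enumeration of the paths of `Q`). -/
theorem statement5 (Q : QuiverData) (hacyc : IsAcyclic Q)
    (hr : ∀ p, 0 < Q.r p) (wp wm : Fin Q.n → ℕ)
    (idx : QPath Q → ℕ) (hidx : Function.Injective idx)
    (L : GLinkedPair Q wp wm) :
    semiInvGen L id ∈ Submodule.span ℂ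
      {f : QPoly Q | ∃ U : GLinkedPair Q wp wm,
        IsWeaklySemiStandard idx U ∧ f = semiInvGen U id} := by
  refine Submodule.span_le.2 ?_ (plusStep idx L)
  rintro f ⟨U, hU, rfl⟩
  exact minusStep idx U hU

end QuiverSAGBI
end

section
/- Let f be a nonzero semi-invariant of the generalized Kronecker quiver. Then there exists a semi-standard linked tableaux pair (T^-, T^+, σ) such that LM(f) = Mon(T^+) = Mon(T^-). -/
namespace QuiverSAGBI

/-- The variable `x^i_{jk}`: the `(j,k)` entry of the generic matrix `M_i`. -/
abbrev KVar (K r0 r1 : ℕ) := Fin K × Fin r1 × Fin r0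

/-- The coordinate ring of the representation space of the generalized
Kronecker quiver with `K` arrows and dimension vector `(r0, r1)`. -/
abbrev KPoly (K r0 r1 : ℕ) := MvPolynomial (KVar K r0 r1) ℂ

/-- `x_v` is a greater variable than `x_w`:  `v.1 < w.1`, or `v.1 = w.1` and
`v.2.1 < w.2.1`, or these agree and `v.2.2 < w.2.2`. -/
def VarGT {K r0 r1 : ℕ} (v w : KVar K r0 r1) : Prop :=
  v.1 < w.1 ∨ (v.1 = w.1 ∧ (v.2.1 < w.2.1 ∨ (v.2.1 = w.2.1 ∧ v.2.2 < w.2.2)))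

/-- The monomial with exponent vector `a` is smaller than the one with exponent
vector `b` in the lexicographic term order: at the most significant variable
where they differ, `a` has the smaller exponent. -/
def MonLT {K r0 r1 : ℕ} (a b : KVar K r0 r1 →₀ ℕ) : Prop :=
  ∃ v, a v < b v ∧ ∀ w, VarGT w v → a w = b w

/-- `mo` is the leading monomial (exponent vector) of `f`. -/
def IsLM {K r0 r1 : ℕ} (f : KPoly K r0 r1) (mo : KVar K r0 r1 →₀ ℕ) : Prop :=
  mo ∈ f.support ∧ ∀ m' ∈ f.support, m' = mo ∨ MonLT m' mo

/-- The substitution action of a pair of matrices `(g, h)` on the coordinate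
ring: `x^i_{jk} ↦ ∑ (h⁻¹)_{j j'} x^i_{j'k'} g_{k' k}`, i.e. `M_i ↦ h⁻¹ M_i g`. -/
noncomputable def glAct {K r0 r1 : ℕ} (g : Matrix (Fin r0) (Fin r0) ℂ)
    (h : Matrix (Fin r1) (Fin r1) ℂ) : KPoly K r0 r1 →ₐ[ℂ] KPoly K r0 r1 :=
  MvPolynomial.aeval fun v : KVar K r0 r1 =>
    ∑ j' : Fin r1, ∑ k' : Fin r0,
      MvPolynomial.C (h⁻¹ v.2.1 j' * g k' v.2.2) * MvPolynomial.X (v.1, j', k')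

/-- `f` is a semi-invariant of weight `(w0, w1)`. -/
def IsSemiInvariant {K r0 r1 : ℕ} (f : KPoly K r0 r1) (w0 w1 : ℤ) : Prop :=
  ∀ (g : Matrix (Fin r0) (Fin r0) ℂ) (h : Matrix (Fin r1) (Fin r1) ℂ),
    IsUnit g.det → IsUnit h.det →
      glAct g h f = MvPolynomial.C (g.det ^ w0 * h.det ^ w1) * f

/-- The semi-invariant ring: the linear span of all semi-invariants. -/
noncomputable def semiInvariantRing (K r0 r1 : ℕ) : Submodule ℂ (KPoly K r0 r1) :=
  Submodule.span ℂ {f | ∃ w0 w1 : ℤ, IsSemiInvariant f w0 w1}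

/-- A linked tableaux pair for the generalized Kronecker quiver:
`Tm` is the tableau `T⁻` (with `r0` rows and `cm` columns, labels `(i,q)`),
`Tp` is the tableau `T⁺` (with `r1` rows and `cp` columns, labels `(i,p)`),
and `link` is a bijection of boxes sending the box labeled `(i,q)` in row `p`
of `T⁻` to a box labeled `(i,p)` lying in row `q` of `T⁺`. -/
structure LinkedPair (K r0 r1 cm cp : ℕ) where
  Tm : Fin r0 → Fin cm → Fin K × Fin r1
  Tp : Fin r1 → Fin cp → Fin K × Fin r0
  link : Fin r0 × Fin cm ≃ Fin r1 × Fin cp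
  link_row : ∀ p c, (link (p, c)).1 = (Tm p c).2
  link_label : ∀ p c, Tp (link (p, c)).1 (link (p, c)).2 = ((Tm p c).1, p)

/-- The exponent vector of `Mon(T⁺)`: a box labeled `(i,k)` in row `q` of `T⁺`
contributes the variable `x^i_{qk}`. -/
noncomputable def monExpP {K r0 r1 cm cp : ℕ} (L : LinkedPair K r0 r1 cm cp) :
    KVar K r0 r1 →₀ ℕ :=
  ∑ q : Fin r1, ∑ c : Fin cp, Finsupp.single ((L.Tp q c).1, q, (L.Tp q c).2) 1

/-- The exponent vector of `Mon(T⁻)`: a box labeled `(i,j)` in row `p` of `T⁻`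
contributes the variable `x^i_{jp}`. -/
noncomputable def monExpM {K r0 r1 cm cp : ℕ} (L : LinkedPair K r0 r1 cm cp) :
    KVar K r0 r1 →₀ ℕ :=
  ∑ p : Fin r0, ∑ c : Fin cm, Finsupp.single ((L.Tm p c).1, (L.Tm p c).2, p) 1

/-- The semi-invariant `f_{T^±}` attached to a linked tableaux pair:
`∑_{α⁻, α⁺} sign(α⁻) sign(α⁺) Mon(α⁻ · α⁺ · T⁺)`, where `α⁺` permutes the
entries of each column of `T⁺` among its rows and `α⁻` permutes the second
entries of the labels of the boxes of `T⁺` linked to each column of `T⁻`. -/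
noncomputable def pairPoly {K r0 r1 cm cp : ℕ} (L : LinkedPair K r0 r1 cm cp) :
    KPoly K r0 r1 :=
  ∑ αm : Fin cm → Equiv.Perm (Fin r0), ∑ αp : Fin cp → Equiv.Perm (Fin r1),
    ((∏ l, (Equiv.Perm.sign (αm l) : ℤ)) * ∏ c, (Equiv.Perm.sign (αp c) : ℤ)) •
      ∏ p : Fin r0, ∏ l : Fin cm,
        MvPolynomial.X
          ((L.Tm p l).1, αp (L.link (p, l)).2 (L.link (p, l)).1, αm l p)

/-- The order on labels: `(i,p) ≤ (j,q)` iff `i < j`, or `i = j` and `p ≤ q`. -/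
def LabelLE {K n : ℕ} (a b : Fin K × Fin n) : Prop :=
  a.1 < b.1 ∨ (a.1 = b.1 ∧ a.2 ≤ b.2)

/-- Strict version of the label order. -/
def LabelLT {K n : ℕ} (a b : Fin K × Fin n) : Prop :=
  a.1 < b.1 ∨ (a.1 = b.1 ∧ a.2 < b.2)

/-- A rectangular tableau is semi-standard if its entries are weakly increasing
along each row and strictly increasing down each column. -/
def IsSemiStandardTab {rows cols K n : ℕ}
    (T : Fin rows → Fin cols → Fin K × Fin n) : Prop :=
  (∀ (i : Fin rows) (c c' : Fin cols), c ≤ c' → LabelLE (T i c) (T i c')) ∧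
  (∀ (c : Fin cols) (i i' : Fin rows), i < i' → LabelLT (T i c) (T i' c))

/-- The link is semi-standard: boxes with equal labels in the same row of `T⁻`
are matched with their partners in `T⁺` in a left-to-right
order-preserving way. -/
def IsSemiStandardLink {K r0 r1 cm cp : ℕ}
    (L : LinkedPair K r0 r1 cm cp) : Prop :=
  ∀ (p : Fin r0) (c c' : Fin cm), L.Tm p c = L.Tm p c' → c < c' →
    (L.link (p, c)).2 < (L.link (p, c')).2

/-- A semi-standard linked tableaux pair: both tableaux and the link are
semi-standard. -/
def IsSemiStandardPair {K r0 r1 cm cp : ℕ}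
    (L : LinkedPair K r0 r1 cm cp) : Prop :=
  IsSemiStandardTab L.Tm ∧ IsSemiStandardTab L.Tp ∧ IsSemiStandardLink L

/-- A (nonempty) semi-standard linked tableaux pair is primitive if its leading
monomial is not the product of the leading monomials of two (nonempty)
semi-standard linked tableaux pairs. -/
def IsPrimitive {K r0 r1 cm cp : ℕ} (L : LinkedPair K r0 r1 cm cp) : Prop :=
  IsSemiStandardPair L ∧ 0 < cm ∧
    ¬∃ (cm1 cp1 cm2 cp2 : ℕ) (L1 : LinkedPair K r0 r1 cm1 cp1)
        (L2 : LinkedPair K r0 r1 cm2 cp2) (m m1 m2 : KVar K r0 r1 →₀ ℕ),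
        0 < cm1 ∧ 0 < cm2 ∧ IsSemiStandardPair L1 ∧ IsSemiStandardPair L2 ∧
        IsLM (pairPoly L) m ∧ IsLM (pairPoly L1) m1 ∧ IsLM (pairPoly L2) m2 ∧
        m = m1 + m2

section Lin
open Finset

theorem pascal0 {M : Type*} [AddCommGroup M] (m : ℕ) (z : ℕ → M)
    (h : ∀ j ≤ m, ∑ i ∈ range (m + 1), i.choose j • z i = 0) : ∀ i ≤ m, z i = 0 := by
  induction m with
  | zero =>
    intro i hi
    obtain rfl : i = 0 := by omega
    simpa using h 0 le_rfl
  | succ m ih =>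
    have hm : z (m + 1) = 0 := by
      have := h (m + 1) le_rfl
      rw [sum_range_succ, sum_eq_zero] at this
      · simpa using this
      · intro i hi
        rw [mem_range] at hi
        rw [Nat.choose_eq_zero_of_lt hi, zero_smul]
    intro i hi
    rcases Nat.lt_or_ge m i with h1 | h1
    · obtain rfl : i = m + 1 := by omega
      exact hm
    · refine ih (fun j hj => ?_) i h1
      have := h j (by omega)
      rw [sum_range_succ, hm] at this
      simpa using this

theorem pascal1 {M : Type*} [AddCommGroup M] (n m : ℕ) (z : ℕ → M)
    (hz : ∀ i < n, z i = 0)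
    (h : ∀ j ≤ m, ∑ i ∈ range (n + m + 1), i.choose j • z i = 0) :
    ∀ i ≤ n + m, z i = 0 := by
  induction n generalizing z with
  | zero => simp only [Nat.zero_add] at h ⊢; exact pascal0 m z h
  | succ n ih =>
    have h0 : z 0 = 0 := hz 0 (by omega)
    have key : ∀ j ≤ m, ∑ i ∈ range (n + m + 1), i.choose j • z (i + 1) = 0 := by
      intro j
      induction j with
      | zero =>
        intro hj
        have := h 0 hj
        rw [show n + 1 + m + 1 = (n + m + 1) + 1 by ring, sum_range_succ', h0] at this
        simpa using this
      | succ j ihj =>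
        intro hj
        have := h (j + 1) hj
        rw [show n + 1 + m + 1 = (n + m + 1) + 1 by ring, sum_range_succ', h0] at this
        simp only [Nat.choose_succ_succ, add_smul, sum_add_distrib] at this
        rw [ihj (by omega)] at this
        simpa using this
    have h2 := ih (fun i => z (i + 1)) (fun i hi => hz _ (by omega)) key
    intro i hi
    rcases i with _ | i
    · exact h0
    · exact h2 i (by omega)

theorem lin_step {V : Type*} [AddCommGroup V] [Module ℂ V] (E T lam : Module.End ℂ V)
    (hET : Commute E T) (hlT : Commute lam T) (g : V) (n m r : ℕ)
    (hlow : ∀ i < n, lam ((E ^ i) g) = 0) (hhigh : ∀ i, n + m < i → lam ((E ^ i) g) = 0)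
    (hr : ((E + T) ^ (r + 1)) g = 0) :
    (n ≤ r → (T ^ (r - n + m + 1)) (lam ((E ^ n) g)) = 0) ∧
    (r < n → lam ((E ^ n) g) = 0) := by
  have expand : ∀ j k, r + 1 ≤ k →
      ∑ l ∈ range (k + 1), k.choose l • (T ^ (k - l)) (lam ((E ^ (j + l)) g)) = 0 := by
    intro j k hk
    have h0 : ((E + T) ^ k) g = 0 := by
      obtain ⟨c, rfl⟩ := Nat.exists_eq_add_of_le hk
      rw [add_comm (r + 1) c, pow_add, Module.End.mul_apply, hr, map_zero]
    have h1 : lam ((E ^ j) (((E + T) ^ k) g)) = 0 := by rw [h0]; simp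
    rw [hET.add_pow] at h1
    simp only [LinearMap.sum_apply, map_sum] at h1
    rw [← h1]
    refine sum_congr rfl fun l _ => ?_
    have h2 : (E ^ l * T ^ (k - l) * ((k.choose l : ℕ) : Module.End ℂ V)) g
        = k.choose l • (T ^ (k - l)) ((E ^ l) g) := by
      rw [((hET.pow_pow l (k - l)).eq), ← Nat.cast_comm, ← nsmul_eq_mul]
      simp [Module.End.mul_apply]
    rw [h2, map_nsmul, map_nsmul]
    congr 1
    have h3 : (E ^ j) ((T ^ (k - l)) ((E ^ l) g)) = (T ^ (k - l)) ((E ^ (j + l)) g) := by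
      rw [pow_add, ← Module.End.mul_apply, (hET.pow_pow j (k - l)).eq]
      simp [Module.End.mul_apply]
    rw [h3]
    exact (LinearMap.congr_fun (hlT.pow_right (k - l)).eq ((E ^ (j + l)) g)).symm
  constructor
  · intro hn
    set K := m + r + 1 with hK
    have hz := pascal1 n m (fun i => K.choose i • (T ^ (K - i)) (lam ((E ^ i) g)))
      (fun i hi => by simp [hlow i hi]) (by
        intro j hj
        have h1 := expand j (K - j) (by omega)
        have h2 : ∑ i ∈ range (n + m + 1), i.choose j •
            (K.choose i • (T ^ (K - i)) (lam ((E ^ i) g)))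
            = ∑ i ∈ range (K + 1), i.choose j •
            (K.choose i • (T ^ (K - i)) (lam ((E ^ i) g))) := by
          rcases le_total (n + m + 1) (K + 1) with h | h
          · refine sum_subset (range_subset_range.2 h) fun i _ hi => ?_
            rw [mem_range] at hi
            simp [hhigh i (by omega)]
          · refine (sum_subset (range_subset_range.2 h) fun i _ hi => ?_).symm
            rw [mem_range] at hi
            simp [Nat.choose_eq_zero_of_lt (show K < i by omega)]
        have hKj : K + 1 = j + (K - j + 1) := by omega
        rw [h2, hKj, sum_range_add, sum_eq_zero, zero_add]
        · have h4 : ∀ l ∈ range (K - j + 1), (j + l).choose j •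
              (K.choose (j + l) • (T ^ (K - (j + l))) (lam ((E ^ (j + l)) g)))
              = K.choose j • ((K - j).choose l • (T ^ (K - j - l)) (lam ((E ^ (j + l)) g))) := by
            intro l hl
            rw [mem_range] at hl
            rw [smul_smul, smul_smul, mul_comm, Nat.choose_mul (by omega),
              Nat.sub_sub, Nat.add_sub_cancel_left]
          rw [sum_congr rfl h4, ← smul_sum, h1, smul_zero]
        · intro i hi
          rw [mem_range] at hi
          rw [Nat.choose_eq_zero_of_lt hi, zero_smul]) n (by omega)
    rw [show r - n + m + 1 = K - n by omega]
    rcases smul_eq_zero.1 ((Nat.cast_smul_eq_nsmul ℂ _ _).trans hz) with h | h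
    · have := (Nat.choose_pos (show n ≤ K by omega)).ne'
      exact absurd (by exact_mod_cast h) this
    · exact h
  · intro hn
    have h1 := expand (n - (r + 1)) (r + 1) le_rfl
    rw [sum_range_succ, sum_eq_zero] at h1
    · simpa [show n - (r + 1) + (r + 1) = n by omega] using h1
    · intro l hl
      rw [mem_range] at hl
      rw [hlow _ (by omega)]; simp

end Lin

section Fn
variable {β : Type*} [DecidableEq β]

/-- The operator `x ∂/∂y` on coefficient functions in the row `a`. -/
def dE (a : β) : Module.End ℂ ((β → ℕ) → ℂ) where
  toFun F := fun t => ((t a : ℂ) + 1) * F (Function.update t a (t a + 1))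
  map_add' F G := by ext t; simp [mul_add]
  map_smul' c F := by ext t; simp; ring

/-- Slice of a coefficient function at exponent `i` in the row `a`. -/
def slice (a : β) (i : ℕ) : Module.End ℂ ((β → ℕ) → ℂ) where
  toFun F := fun t => F (Function.update t a i)
  map_add' F G := by ext t; simp
  map_smul' c F := by ext t; simp

theorem dE_apply (a : β) (F : (β → ℕ) → ℂ) (t : β → ℕ) :
    dE a F t = ((t a : ℂ) + 1) * F (Function.update t a (t a + 1)) := rfl

theorem slice_apply (a : β) (i : ℕ) (F : (β → ℕ) → ℂ) (t : β → ℕ) :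
    slice a i F t = F (Function.update t a i) := rfl

theorem dE_comm (a b : β) : Commute (dE a) (dE b) := by
  rcases eq_or_ne a b with rfl | h
  · exact Commute.refl _
  · refine LinearMap.ext fun F => funext fun t => ?_
    simp only [Module.End.mul_apply, dE_apply, Function.update_of_ne h, Function.update_of_ne h.symm]
    rw [Function.update_comm h]; ring

theorem slice_comm (a b : β) (h : a ≠ b) (i : ℕ) : Commute (slice a i) (dE b) := by
  refine LinearMap.ext fun F => funext fun t => ?_
  simp only [Module.End.mul_apply, dE_apply, slice_apply, Function.update_of_ne h.symm]
  rw [Function.update_comm h]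

theorem slice_pow (a : β) (i j : ℕ) (F : (β → ℕ) → ℂ) :
    slice a j ((dE a ^ i) F) = ((j + 1).ascFactorial i : ℂ) • slice a (j + i) F := by
  induction i generalizing j with
  | zero => simp
  | succ i ih =>
    have h : slice a j ((dE a ^ (i + 1)) F)
        = ((j : ℂ) + 1) • slice a (j + 1) ((dE a ^ i) F) := by
      rw [pow_succ']
      funext t
      simp [slice_apply, dE_apply, Module.End.mul_apply]
    rw [h, ih, smul_smul, show j + 1 + i = j + (i + 1) by ring, Nat.ascFactorial_succ,
      ← Nat.succ_ascFactorial]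
    push_cast
    rfl

theorem slice_pow0 (a : β) (i : ℕ) (F : (β → ℕ) → ℂ) :
    slice a 0 ((dE a ^ i) F) = ((0 + 1).ascFactorial i : ℂ) • slice a i F := by
  have := slice_pow a i 0 F
  rwa [Nat.zero_add i] at this

/-- Lexicographic comparison along a list of rows. -/
def LexLE : List β → (β → ℕ) → (β → ℕ) → Prop
  | [], _, _ => True
  | a :: l, u, w => u a < w a ∨ (w a = u a ∧ LexLE l u w)

/-- The ballot condition along a list of rows. -/
def Ballot : List β → ℕ → (β → ℕ) → (β → ℕ) → Prop
  | [], _, _, _ => True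
  | a :: l, r, u, d => u a ≤ r ∧ Ballot l (r - u a + (d a - u a)) u d

theorem LexLE_congr (l : List β) (u w w' : β → ℕ) (h : ∀ a ∈ l, w a = w' a) :
    LexLE l u w → LexLE l u w' := by
  induction l with
  | nil => exact id
  | cons a l ih =>
    simp only [LexLE]
    rw [h a (by simp)]
    rintro (h1 | ⟨h1, h2⟩)
    · exact Or.inl h1
    · exact Or.inr ⟨h1, ih (fun b hb => h b (by simp [hb])) h2⟩

theorem ballot_main (u d : β → ℕ) (l : List β) : l.Nodup → ∀ (r : ℕ) (F : (β → ℕ) → ℂ),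
    F u ≠ 0 → (∀ w, F w ≠ 0 → ∀ a ∈ l, w a ≤ d a) → (∀ w, F w ≠ 0 → LexLE l u w) →
    ((l.map dE).sum ^ (r + 1)) F = 0 → Ballot l r u d := by
  induction l with
  | nil => intros; trivial
  | cons a l ih =>
    intro hnd r F hu hd hlex h0
    rw [List.nodup_cons] at hnd
    have hcE : Commute (dE a) (l.map dE).sum := by
      refine Commute.list_sum_right _ _ fun x hx => ?_
      obtain ⟨b, -, rfl⟩ := List.mem_map.1 hx
      exact dE_comm a b
    have hcS : ∀ i, Commute (slice a i) (l.map dE).sum := by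
      intro i
      refine Commute.list_sum_right _ _ fun x hx => ?_
      obtain ⟨b, hb, rfl⟩ := List.mem_map.1 hx
      exact slice_comm a b (by rintro rfl; exact hnd.1 hb) i
    rw [List.map_cons, List.sum_cons] at h0
    have hud : u a ≤ d a := hd u hu a (by simp)
    have hslow : ∀ i, i < u a → slice a i F = 0 := by
      intro i hi
      funext t
      by_contra hne
      have := hlex _ hne
      simp only [LexLE, Function.update_self] at this
      omega
    have hshigh : ∀ i, d a < i → slice a i F = 0 := by
      intro i hi
      funext t
      by_contra hne
      have := hd _ hne a (by simp)
      simp only [Function.update_self] at this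
      omega
    have hsn : slice a (u a) F u ≠ 0 := by
      rw [slice_apply, Function.update_eq_self]; exact hu
    have step := lin_step (dE a) (l.map dE).sum (slice a 0) hcE (hcS 0) F (u a) (d a - u a) r
      (fun i hi => by rw [slice_pow0, hslow i hi, smul_zero])
      (fun i hi => by rw [slice_pow0, hshigh i (by omega), smul_zero]) h0
    have hfac : ((0 + 1).ascFactorial (u a) : ℂ) ≠ 0 := by
      exact_mod_cast (Nat.ascFactorial_pos _ _).ne'
    rw [slice_pow0] at step
    have hnr : u a ≤ r := by
      by_contra hlt
      have := step.2 (by omega)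
      rcases smul_eq_zero.1 this with h | h
      · exact hfac h
      · exact hsn (by rw [h]; rfl)
    refine ⟨hnr, ih hnd.2 _ (slice a (u a) F) hsn ?_ ?_ ?_⟩
    · intro w hw b hb
      have := hd _ hw b (by simp [hb])
      rwa [Function.update_of_ne (by rintro rfl; exact hnd.1 hb)] at this
    · intro w hw
      have := hlex _ hw
      simp only [LexLE, Function.update_self] at this
      rcases this with h | ⟨-, h⟩
      · omega
      · refine LexLE_congr l u _ _ (fun b hb => ?_) h
        rw [Function.update_of_ne (by rintro rfl; exact hnd.1 hb)]
    · have h1 := step.1 hnr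
      rw [map_smul] at h1
      rcases smul_eq_zero.1 h1 with h | h
      · exact absurd h hfac
      · exact h

end Fn

theorem ballot_sum {β : Type*} [LinearOrder β] (u d : β → ℕ) (l : List β) (hl : l.Pairwise (· < ·)) (r : ℕ)
    (h : Ballot l r u d) (a : β) (ha : a ∈ l) :
    ((l.filter (· ≤ a)).map u).sum ≤ r + ((l.filter (· < a)).map (fun b => d b - u b)).sum := by
  induction l generalizing r with
  | nil => simp at ha
  | cons c l ih =>
    rw [List.pairwise_cons] at hl
    obtain ⟨h1, h2⟩ := h
    rcases List.mem_cons.1 ha with rfl | ha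
    · have : l.filter (· ≤ a) = [] := by
        rw [List.filter_eq_nil_iff]
        intro b hb
        simpa using hl.1 b hb
      simp [this]
      omega
    · have hca := hl.1 a ha
      have := ih hl.2 _ h2 ha
      simp only [List.filter_cons, hca.le, hca, decide_true, if_true, List.map_cons, List.sum_cons]
      omega

end QuiverSAGBI

namespace QuiverSAGBI
open MvPolynomial

theorem lexLE_of {β : Type*} [LinearOrder β] (u w : β → ℕ)
    (h : ∀ a, (∀ b < a, w b = u b) → w a ≠ u a → u a < w a) (l : List β)
    (hl : l.Pairwise (· < ·)) (hc : ∀ b, b ∈ l ∨ w b = u b) : LexLE l u w := by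
  induction l with
  | nil => trivial
  | cons a l ih =>
    rw [List.pairwise_cons] at hl
    have hb : ∀ b < a, w b = u b := by
      intro b hb
      rcases hc b with h1 | h1
      · rcases List.mem_cons.1 h1 with rfl | h1
        · exact absurd hb (lt_irrefl _)
        · exact absurd (hl.1 b h1) (not_lt_of_gt hb)
      · exact h1
    by_cases ha : w a = u a
    · refine Or.inr ⟨ha, ih hl.2 fun b => ?_⟩
      rcases hc b with h1 | h1
      · rcases List.mem_cons.1 h1 with rfl | h1
        · exact Or.inr ha
        · exact Or.inl h1
      · exact Or.inr h1
    · exact Or.inl (h a hb ha)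

theorem ballot_poly {K r0 r1 : ℕ} {β : Type*} [LinearOrder β] [Fintype β]
    (x y : β → KVar K r0 r1) (hx : Function.Injective x) (hy : Function.Injective y)
    (hxy : ∀ b b', x b ≠ y b') (hxx : ∀ b b', b < b' → VarGT (x b) (x b'))
    (hxyo : ∀ b b', b ≤ b' → VarGT (x b) (y b')) (f : KPoly K r0 r1)
    (u : KVar K r0 r1 →₀ ℕ) (hu : IsLM f u) (hD : ∑ b, X (x b) * pderiv (y b) f = 0) (a : β) :
    ∑ b with b ≤ a, u (y b) ≤ ∑ b with b < a, u (x b) := by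
  classical
  set d : β → ℕ := fun b => u (x b) + u (y b) with hd
  set tu : β → ℕ := fun b => u (y b) with htu
  let ex : (β → ℕ) → (KVar K r0 r1 →₀ ℕ) := fun t => Finsupp.equivFunOnFinite.symm
    (Function.extend x (fun b => d b - t b) (Function.extend y t u))
  have exv : ∀ t v, ex t v
      = Function.extend x (fun b => d b - t b) (Function.extend y t u) v := by
    intro t v
    simp only [ex, Finsupp.coe_equivFunOnFinite_symm]
  have exx : ∀ t b, ex t (x b) = d b - t b := fun t b => by
    rw [exv, hx.extend_apply]
  have exy : ∀ t b, ex t (y b) = t b := by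
    intro t b
    rw [exv, Function.extend_apply' _ _ _ (by rintro ⟨c, hc⟩; exact hxy _ _ hc), hy.extend_apply]
  have exo : ∀ t v, (∀ b, x b ≠ v) → (∀ b, y b ≠ v) → ex t v = u v := by
    intro t v h1 h2
    rw [exv, Function.extend_apply' _ _ _ (by rintro ⟨c, hc⟩; exact h1 _ hc),
      Function.extend_apply' _ _ _ (by rintro ⟨c, hc⟩; exact h2 _ hc)]
  have extu : ex tu = u := by
    ext v
    by_cases h1 : ∃ b, x b = v
    · obtain ⟨b, rfl⟩ := h1
      rw [exx]; simp [hd, htu]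
    · by_cases h2 : ∃ b, y b = v
      · obtain ⟨b, rfl⟩ := h2
        rw [exy]
      · push Not at h1 h2
        exact exo _ _ h1 h2
  set F : (β → ℕ) → ℂ := fun t => if ∀ b, t b ≤ d b then coeff (ex t) f else 0 with hF
  set l := (Finset.univ : Finset β).sort (· ≤ ·) with hl
  have hlp : l.Pairwise (· < ·) := (Finset.sortedLT_sort _).pairwise
  have hmem : ∀ b, b ∈ l := fun b => by simp [hl]
  have hlF : l.toFinset = Finset.univ := Finset.sort_toFinset _ _
  have hnd : l.Nodup := Finset.sort_nodup _ _
  have main : Ballot l 0 tu d := by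
    refine ballot_main tu d l hnd 0 F ?_ ?_ ?_ ?_
    · rw [hF]
      simp only
      rw [if_pos (fun b => by simp [hd, htu]), extu]
      exact mem_support_iff.1 hu.1
    · intro w hw b _
      by_contra hlt
      apply hw
      rw [hF]
      simp only
      rw [if_neg (fun h => hlt (h b))]
    · intro w hw
      have hwd : ∀ b, w b ≤ d b := by
        by_contra hlt
        apply hw
        rw [hF]
        simp only
        rw [if_neg hlt]
      have hws : ex w ∈ f.support := by
        rw [mem_support_iff]
        simpa [hF, hwd] using hw
      refine lexLE_of tu w ?_ l hlp (fun b => Or.inl (hmem b))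
      intro a ha hne
      by_contra hlt
      have hlt' : w a < tu a := by omega
      have hxa : u (x a) < ex w (x a) := by
        have := hwd a
        rw [exx]
        simp only [hd, htu] at *
        omega
      rcases hu.2 _ hws with h | ⟨v, hv, hag⟩
      · rw [h] at hxa; exact lt_irrefl _ hxa
      · have hnot : ¬ VarGT (x a) v := fun hg => hxa.ne' (hag _ hg)
        by_cases h1 : ∃ b, x b = v
        · obtain ⟨b, rfl⟩ := h1
          rcases lt_trichotomy b a with h | rfl | h
          · rw [exx, ha b h] at hv
            simp [hd, htu] at hv
          · omega
          · exact hnot (hxx _ _ h)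
        · by_cases h2 : ∃ b, y b = v
          · obtain ⟨b, rfl⟩ := h2
            rcases lt_or_ge b a with h | h
            · rw [exy, ha b h] at hv
              exact lt_irrefl _ hv
            · exact hnot (hxyo _ _ h)
          · push Not at h1 h2
            rw [exo _ _ h1 h2] at hv
            exact lt_irrefl _ hv
    · rw [zero_add, pow_one, ← List.sum_toFinset _ hnd, hlF]
      funext t
      rw [LinearMap.sum_apply, Finset.sum_apply]
      simp only [dE_apply, Pi.zero_apply]
      by_cases ht : ∀ b, t b ≤ d b
      · have h1 := congrArg (coeff (ex t)) hD
        rw [coeff_sum, coeff_zero] at h1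
        rw [← h1]
        refine Finset.sum_congr rfl fun b _ => ?_
        rw [coeff_X_mul', coeff_pderiv]
        by_cases hb : t b + 1 ≤ d b
        · have hF1 : ∀ c, Function.update t b (t b + 1) c ≤ d c := by
            intro c
            by_cases hc : c = b
            · subst hc; simpa using hb
            · rw [Function.update_of_ne hc]; exact ht c
          have hin : x b ∈ (ex t).support := by
            rw [Finsupp.mem_support_iff, exx]; omega
          rw [if_pos hin, hF]
          simp only
          rw [if_pos hF1, mul_comm]
          congr 1
          · congr 1
            ext v
            rw [Finsupp.add_apply, Finsupp.tsub_apply]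
            by_cases h1 : ∃ c, x c = v
            · obtain ⟨c, rfl⟩ := h1
              rw [exx, exx, Finsupp.single_eq_of_ne (hxy c b)]
              by_cases hc : c = b
              · subst hc; simp; omega
              · rw [Function.update_of_ne hc, Finsupp.single_eq_of_ne (fun h => hc (hx h))]
                simp
            · by_cases h2 : ∃ c, y c = v
              · obtain ⟨c, rfl⟩ := h2
                rw [exy, exy, Finsupp.single_eq_of_ne (fun h => hxy b c h.symm)]
                by_cases hc : c = b
                · subst hc; simp
                · rw [Function.update_of_ne hc, Finsupp.single_eq_of_ne (fun h => hc (hy h))]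
                  simp
              · push Not at h1 h2
                rw [exo _ _ h1 h2, exo _ _ h1 h2, Finsupp.single_eq_of_ne (h1 b).symm,
                  Finsupp.single_eq_of_ne (h2 b).symm]
                simp
          · rw [Finsupp.tsub_apply, exy, Finsupp.single_eq_of_ne (fun h => hxy b b h.symm)]
            simp
        · have hin : x b ∉ (ex t).support := by
            rw [Finsupp.mem_support_iff, exx]; omega
          rw [if_neg hin, hF]
          simp only
          rw [if_neg, mul_zero]
          intro h
          have := h b
          simp at this
          omega
      · refine Finset.sum_eq_zero fun b _ => ?_
        rw [hF]
        simp only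
        rw [if_neg, mul_zero]
        intro h
        apply ht
        intro c
        have := h c
        by_cases hc : c = b
        · subst hc; simp at this; omega
        · rwa [Function.update_of_ne hc] at this
  have h2 := ballot_sum tu d l hlp 0 main a (hmem a)
  have hsum : ∀ (P : β → Prop) [DecidablePred P] (g : β → ℕ),
      ((l.filter (fun b => decide (P b))).map g).sum = ∑ b with P b, g b := by
    intro P _ g
    rw [← List.sum_toFinset g (hnd.filter _), List.toFinset_filter, hlF]
    simp
  rw [hsum (fun b => b ≤ a), hsum (fun b => b < a)] at h2
  simpa [hd, htu] using h2

theorem der_zero {σ : Type*} (D : Derivation ℂ (MvPolynomial σ ℂ) (MvPolynomial σ ℂ))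
    (f : MvPolynomial σ ℂ)
    (h : ∀ s : ℂ, aeval (fun v => X v + C s * D (X v)) f = f) : D f = 0 := by
  let Φ : MvPolynomial σ ℂ →ₐ[ℂ] Polynomial (MvPolynomial σ ℂ) :=
    aeval (fun v => Polynomial.C (X v) + Polynomial.X * Polynomial.C (D (X v)))
  have h1 : ∀ p, (Φ p).coeff 0 = p ∧ (Φ p).coeff 1 = D p := by
    intro p
    induction p using MvPolynomial.induction_on with
    | C a =>
      have : Φ (C a) = Polynomial.C (C a) := by
        simp [Φ, IsScalarTower.algebraMap_apply ℂ (MvPolynomial σ ℂ)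
          (Polynomial (MvPolynomial σ ℂ)), algebraMap_eq]
      rw [this]
      simp [Polynomial.coeff_C, ← algebraMap_eq]
    | add p q hp hq => simp [hp, hq]
    | mul_X p v hp =>
      have hv : Φ (X v) = Polynomial.C (X v) + Polynomial.X * Polynomial.C (D (X v)) := by
        simp [Φ]
      rw [map_mul, hv, mul_add, ← mul_assoc, mul_right_comm]
      constructor
      · simp [hp]
      · rw [D.leibniz]
        simp [hp]
        ring
  have h2 : ∀ (s : ℂ) p, Polynomial.eval (C s) (Φ p)
      = aeval (fun v => X v + C s * D (X v)) p := by
    intro s p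
    induction p using MvPolynomial.induction_on with
    | C a => simp [Φ, IsScalarTower.algebraMap_apply ℂ (MvPolynomial σ ℂ)
          (Polynomial (MvPolynomial σ ℂ)), algebraMap_eq]
    | add p q hp hq => simp [hp, hq]
    | mul_X p v hp =>
      rw [map_mul, map_mul, Polynomial.eval_mul, hp]
      simp [Φ]
      exact Or.inl (mul_comm _ _)
  have h3 : Φ f = Polynomial.C f := by
    apply Polynomial.eq_of_infinite_eval_eq
    refine (Set.infinite_range_of_injective (C_injective σ ℂ)).mono ?_
    rintro _ ⟨s, rfl⟩
    simp only [Set.mem_ofPred_eq, Polynomial.eval_C]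
    rw [h2, h]
  rw [← (h1 f).2, h3, Polynomial.coeff_C]
  simp

theorem der_zero' {σ β : Type*} [DecidableEq σ] [Fintype β] (x y : β → σ) (f : MvPolynomial σ ℂ)
    (h : ∀ s : ℂ, aeval (fun v => X v + C s * ∑ b, if y b = v then X (x b) else 0) f = f) :
    ∑ b, X (x b) * pderiv (y b) f = 0 := by
  have hs : ∀ p, (∑ b, (X (x b) : MvPolynomial σ ℂ) • pderiv (R := ℂ) (y b)) p
      = ∑ b, X (x b) * pderiv (y b) p := by
    intro p
    rw [← Derivation.coeFnAddMonoidHom_apply, map_sum, Finset.sum_apply]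
    simp
  rw [← hs]
  apply der_zero
  intro s
  refine Eq.trans ?_ (h s)
  congr 2
  funext v
  rw [hs]
  congr 2
  refine Finset.sum_congr rfl fun b _ => ?_
  rw [pderiv_X]
  by_cases hb : y b = v
  · subst hb; simp
  · rw [if_neg hb, Pi.single_eq_of_ne (fun h => hb h.symm), mul_zero]

end QuiverSAGBI

namespace QuiverSAGBI
open MvPolynomial

theorem lower_card {n : ℕ} (P : Fin n → Prop) [DecidablePred P]
    (hP : ∀ c c', c ≤ c' → P c' → P c) (c : Fin n) :
    P c ↔ (c : ℕ) < (Finset.univ.filter P).card := by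
  constructor
  · intro h
    have : Finset.Iic c ⊆ Finset.univ.filter P := by
      intro x hx
      simpa using hP x c (Finset.mem_Iic.1 hx) h
    have := Finset.card_le_card this
    rw [Fin.card_Iic] at this
    omega
  · intro h
    by_contra hc
    have : Finset.univ.filter P ⊆ Finset.Iio c := by
      intro x hx
      rw [Finset.mem_Iio]
      by_contra hx'
      exact hc (hP c x (not_lt.1 hx') (by simpa using hx))
    have := Finset.card_le_card this
    rw [Fin.card_Iio] at this
    omega

theorem exists_tab {β σ : Type*} [LinearOrder β] [Fintype β] {R n : ℕ} (V : β × Fin R ≃ σ)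
    (u : σ → ℕ) (hsum : ∀ p, ∑ b, u (V (b, p)) = n)
    (hb : ∀ p p', p < p' → ∀ a, ∑ b with b ≤ a, u (V (b, p')) ≤ ∑ b with b < a, u (V (b, p))) :
    ∃ (T : Fin R → Fin n → β) (q : Fin R × Fin n ≃ Σ v, Fin (u v)),
      (∀ p c, (q (p, c)).1 = V (T p c, p)) ∧ (∀ p c c', c ≤ c' → T p c ≤ T p c') ∧
      (∀ c p p', p < p' → T p c < T p' c) ∧
      (∀ p c c' v k k', q (p, c) = ⟨v, k⟩ → q (p, c') = ⟨v, k'⟩ → (c < c' ↔ k < k')) := by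
  classical
  have hcard : ∀ p, Fintype.card (Σₗ b, Fin (u (V (b, p)))) = n := by
    intro p
    rw [Fintype.card_lex, Fintype.card_sigma]
    simpa using hsum p
  let e : ∀ p, Fin n ≃o Σₗ b, Fin (u (V (b, p))) := fun p =>
    Fintype.orderIsoFinOfCardEq _ (hcard p)
  let T : Fin R → Fin n → β := fun p c => (ofLex (e p c)).1
  have hmono : ∀ p c c', c ≤ c' → T p c ≤ T p c' := by
    intro p c c' h
    have := (e p).monotone h
    rw [Sigma.Lex.le_def] at this
    rcases this with h | ⟨h, -⟩
    · exact h.le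
    · exact h.le
  have hcount : ∀ p (P : β → Prop) [DecidablePred P],
      (Finset.univ.filter (fun c => P (T p c))).card = ∑ b with P b, u (V (b, p)) := by
    intro p P _
    have h1 : (Finset.univ.filter (fun c => P (T p c))).card
        = ((Finset.univ.filter P).sigma
          (fun b => (Finset.univ : Finset (Fin (u (V (b, p))))))).card := by
      refine Finset.card_bij (fun c _ => ofLex (e p c)) ?_ ?_ ?_
      · intro c hc
        simpa [T] using hc
      · intro c _ c' _ h
        exact (e p).injective h
      · intro s hs
        refine ⟨(e p).symm (toLex s), ?_, ?_⟩
        · simpa [T] using hs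
        · simp
    rw [h1, Finset.card_sigma]
    simp
  let q : Fin R × Fin n ≃ Σ v, Fin (u v) :=
    (((Equiv.sigmaEquivProd (Fin R) (Fin n)).symm.trans
      (Equiv.sigmaCongrRight fun p => (e p).toEquiv.trans ofLex)).trans
      (⟨fun s => ⟨(s.2.1, s.1), s.2.2⟩, fun s => ⟨s.1.2, s.1.1, s.2⟩, fun _ => rfl, fun _ => rfl⟩ :
        (Σ p, Σ b, Fin (u (V (b, p)))) ≃ Σ bp, Fin (u (V bp)))).trans
      (Equiv.sigmaCongrLeft (β := fun v => Fin (u v)) V)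
  have hq : ∀ p c, q (p, c) = ⟨V (T p c, p), (ofLex (e p c)).2⟩ := fun p c => rfl
  refine ⟨T, q, fun p c => rfl, hmono, ?_, ?_⟩
  · intro c p p' hp
    have h1 := (lower_card (fun c => T p' c ≤ T p' c) (fun _ _ _ _ => le_rfl) c)
    have h2 := (lower_card (fun x => T p' x ≤ T p' c)
      (fun x x' h h' => (hmono p' x x' h).trans h') c).1 le_rfl
    rw [hcount p' (fun b => b ≤ T p' c)] at h2
    refine (lower_card (fun x => T p x < T p' c)
      (fun x x' h h' => (hmono p x x' h).trans_lt h') c).2 ?_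
    rw [hcount p (fun b => b < T p' c)]
    exact h2.trans_le (hb p p' hp _)
  · intro p c c' v k k' h h'
    rw [hq] at h h'
    rw [← (e p).lt_iff_lt]
    simp only [T] at h h'
    obtain ⟨⟨b, j⟩, hs⟩ : ∃ s : Σ b, Fin (u (V (b, p))), toLex s = e p c := ⟨ofLex (e p c), rfl⟩
    obtain ⟨⟨b', j'⟩, hs'⟩ : ∃ s : Σ b, Fin (u (V (b, p))), toLex s = e p c' :=
      ⟨ofLex (e p c'), rfl⟩
    rw [← hs, ← hs']
    rw [← hs] at h
    rw [← hs'] at h'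
    simp only [ofLex_toLex] at h h'
    obtain rfl : V (b, p) = v := congrArg Sigma.fst h
    have hbb : b' = b := congrArg Prod.fst (V.injective (congrArg Sigma.fst h'))
    subst hbb
    obtain rfl : j = k := by simpa using h
    obtain rfl : j' = k' := by simpa using h'
    rw [Sigma.Lex.lt_def]
    constructor
    · rintro (h | ⟨_, h⟩)
      · exact absurd h (lt_irrefl _)
      · exact h
    · intro h
      exact Or.inr ⟨rfl, h⟩

theorem coeff_diag {σ : Type*} [Fintype σ] (c : σ → ℂ) (f : MvPolynomial σ ℂ) (u : σ →₀ ℕ) :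
    coeff u (aeval (fun v => C (c v) * X v) f) = (∏ v, c v ^ u v) * coeff u f := by
  classical
  induction f using MvPolynomial.induction_on' with
  | add p q hp hq => rw [map_add, coeff_add, coeff_add, hp, hq, mul_add]
  | monomial w a =>
    have : aeval (fun v => C (c v) * X v) (monomial w a) = monomial w ((∏ v, c v ^ w v) * a) := by
      rw [aeval_monomial, Finsupp.prod_fintype _ _ (by simp)]
      simp_rw [mul_pow, ← C_pow]
      rw [Finset.prod_mul_distrib, monomial_eq (s := w), Finsupp.prod_fintype _ _ (by simp),
        algebraMap_eq, C_mul, map_prod]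
      ring
    rw [this, coeff_monomial, coeff_monomial]
    split_ifs with h
    · rw [h]
    · simp

section SI
variable {K r0 r1 : ℕ} {f : KPoly K r0 r1} {w0 w1 : ℤ}

theorem colD (hsi : IsSemiInvariant f w0 w1) (p p' : Fin r0) (hp : p ≠ p') :
    ∑ b : Fin K ×ₗ Fin r1, X ((ofLex b).1, (ofLex b).2, p) *
      pderiv ((ofLex b).1, (ofLex b).2, p') f = 0 := by
  refine der_zero' (fun b : Fin K ×ₗ Fin r1 => ((ofLex b).1, (ofLex b).2, p))
    (fun b : Fin K ×ₗ Fin r1 => ((ofLex b).1, (ofLex b).2, p')) f fun s => ?_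
  have h := hsi (Matrix.transvection p p' s) 1
    (by rw [Matrix.det_transvection_of_ne _ _ hp]; exact isUnit_one) (by simp)
  rw [Matrix.det_transvection_of_ne _ _ hp] at h
  simp only [Matrix.det_one, one_zpow, mul_one, C_1, one_mul] at h
  refine Eq.trans ?_ h
  rw [glAct]
  congr 2
  funext ⟨i, j, k⟩
  have h1 : (∑ b : Fin K ×ₗ Fin r1, if ((ofLex b).1, (ofLex b).2, p') = (i, j, k) then
      (X ((ofLex b).1, (ofLex b).2, p) : KPoly K r0 r1) else 0)
      = if p' = k then X (i, j, p) else 0 := by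
    rw [Finset.sum_eq_single (toLex (i, j))]
    · simp
    · intro b _ hb
      rw [if_neg]
      intro h
      apply hb
      simp only [Prod.mk.injEq] at h
      rw [← h.1, ← h.2.1]; rfl
    · simp
  rw [h1]
  simp only [inv_one, Matrix.one_apply, ite_mul, one_mul, zero_mul, apply_ite C, C_0]
  rw [Finset.sum_comm]
  simp only [Matrix.transvection, Matrix.add_apply, Matrix.one_apply, Matrix.single_apply,
    Finset.sum_ite_eq, Finset.mem_univ, if_true, C_add, add_mul, Finset.sum_add_distrib,
    apply_ite C, C_0, C_1, ite_mul, one_mul, zero_mul, Finset.sum_ite_eq', ite_and]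
  by_cases hk : p' = k
  · simp [hk]
  · simp [hk]

theorem rowD (hsi : IsSemiInvariant f w0 w1) (p p' : Fin r1) (hp : p ≠ p') :
    ∑ b : Fin K ×ₗ Fin r0, X ((ofLex b).1, p, (ofLex b).2) *
      pderiv ((ofLex b).1, p', (ofLex b).2) f = 0 := by
  refine der_zero' (fun b : Fin K ×ₗ Fin r0 => ((ofLex b).1, p, (ofLex b).2))
    (fun b : Fin K ×ₗ Fin r0 => ((ofLex b).1, p', (ofLex b).2)) f fun s => ?_
  have h := hsi 1 (Matrix.transvection p' p (-s)) (by simp)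
    (by rw [Matrix.det_transvection_of_ne _ _ hp.symm]; exact isUnit_one)
  rw [Matrix.det_transvection_of_ne _ _ hp.symm] at h
  simp only [Matrix.det_one, one_zpow, mul_one, C_1, one_mul] at h
  refine Eq.trans ?_ h
  have hinv : (Matrix.transvection p' p (-s))⁻¹ = Matrix.transvection p' p s := by
    apply Matrix.inv_eq_left_inv
    rw [Matrix.transvection_mul_transvection_same _ _ hp.symm, add_neg_cancel,
      Matrix.transvection_zero]
  rw [glAct, hinv]
  congr 2
  funext ⟨i, j, k⟩
  have h1 : (∑ b : Fin K ×ₗ Fin r0, if ((ofLex b).1, p', (ofLex b).2) = (i, j, k) then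
      (X ((ofLex b).1, p, (ofLex b).2) : KPoly K r0 r1) else 0)
      = if p' = j then X (i, p, k) else 0 := by
    rw [Finset.sum_eq_single (toLex (i, k))]
    · simp
    · intro b _ hb
      rw [if_neg]
      intro h
      apply hb
      simp only [Prod.mk.injEq] at h
      rw [← h.1, ← h.2.2]; rfl
    · simp
  rw [h1]
  simp only [Matrix.transvection, Matrix.add_apply, Matrix.one_apply, Matrix.single_apply,
    mul_ite, mul_one, mul_zero, 
    Finset.sum_ite_eq, Finset.mem_univ, if_true, C_add, add_mul, Finset.sum_add_distrib,
    apply_ite C, C_0, C_1, ite_mul, one_mul, zero_mul, Finset.sum_ite_eq', ite_and]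
  by_cases hk : p' = j
  · simp [hk]
  · simp [hk]

theorem colW (hsi : IsSemiInvariant f w0 w1) (u : KVar K r0 r1 →₀ ℕ) (hu : u ∈ f.support) (p : Fin r0) :
    (2 : ℂ) ^ (∑ b : Fin K ×ₗ Fin r1, u ((ofLex b).1, (ofLex b).2, p)) = 2 ^ w0 := by
  have hdet : (Matrix.diagonal (fun k : Fin r0 => if k = p then (2 : ℂ) else 1)).det = 2 := by
    rw [Matrix.det_diagonal, Finset.prod_ite_eq']; simp
  have h := hsi (Matrix.diagonal (fun k => if k = p then (2 : ℂ) else 1)) 1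
    (by rw [hdet]; simp) (by simp)
  rw [hdet, Matrix.det_one, one_zpow, mul_one] at h
  have h2 : glAct (K := K) (Matrix.diagonal (fun k => if k = p then (2 : ℂ) else 1))
      (1 : Matrix (Fin r1) (Fin r1) ℂ)
      = aeval (fun v => C (if v.2.2 = p then (2 : ℂ) else 1) * X v) := by
    rw [glAct]
    congr 1
    funext ⟨i, j, k⟩
    simp [Matrix.one_apply, Matrix.diagonal_apply, apply_ite C]
  rw [h2] at h
  have h3 := congrArg (coeff u) h
  rw [coeff_diag, coeff_C_mul] at h3
  have h4 := mul_right_cancel₀ (mem_support_iff.1 hu) h3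
  rw [← h4, ← Finset.prod_pow_eq_pow_sum]
  rw [Fintype.prod_prod_type, ← (toLex (α := Fin K × Fin r1)).prod_comp, Fintype.prod_prod_type]
  refine Finset.prod_congr rfl fun i _ => ?_
  rw [Fintype.prod_prod_type]
  refine Finset.prod_congr rfl fun j _ => ?_
  simp [ite_pow]

theorem rowW (hsi : IsSemiInvariant f w0 w1) (u : KVar K r0 r1 →₀ ℕ) (hu : u ∈ f.support) (p : Fin r1) :
    (2 : ℂ) ^ (∑ b : Fin K ×ₗ Fin r0, u ((ofLex b).1, p, (ofLex b).2)) = (2⁻¹) ^ w1 := by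
  have hdet : (Matrix.diagonal (fun k : Fin r1 => if k = p then (2 : ℂ)⁻¹ else 1)).det = 2⁻¹ := by
    rw [Matrix.det_diagonal, Finset.prod_ite_eq']; simp
  have h := hsi 1 (Matrix.diagonal (fun k => if k = p then (2 : ℂ)⁻¹ else 1)) (by simp)
    (by rw [hdet]; simp)
  rw [hdet, Matrix.det_one, one_zpow, one_mul] at h
  have hinv : (Matrix.diagonal (fun k : Fin r1 => if k = p then (2 : ℂ)⁻¹ else 1))⁻¹
      = Matrix.diagonal (fun k : Fin r1 => if k = p then (2 : ℂ) else 1) := by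
    apply Matrix.inv_eq_left_inv
    rw [Matrix.diagonal_mul_diagonal, ← Matrix.diagonal_one]
    congr 1
    funext k
    by_cases hk : k = p <;> simp [hk]
  have h2 : glAct (K := K) (1 : Matrix (Fin r0) (Fin r0) ℂ)
      (Matrix.diagonal (fun k => if k = p then (2 : ℂ)⁻¹ else 1))
      = aeval (fun v => C (if v.2.1 = p then (2 : ℂ) else 1) * X v) := by
    rw [glAct, hinv]
    congr 1
    funext ⟨i, j, k⟩
    simp [Matrix.one_apply, Matrix.diagonal_apply, apply_ite C]
  rw [h2] at h
  have h3 := congrArg (coeff u) h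
  rw [coeff_diag, coeff_C_mul] at h3
  have h4 := mul_right_cancel₀ (mem_support_iff.1 hu) h3
  rw [← h4, ← Finset.prod_pow_eq_pow_sum]
  rw [Fintype.prod_prod_type, ← (toLex (α := Fin K × Fin r0)).prod_comp, Fintype.prod_prod_type]
  refine Finset.prod_congr rfl fun i _ => ?_
  rw [Fintype.prod_prod_type, Finset.prod_comm]
  refine Finset.prod_congr rfl fun j _ => ?_
  simp [ite_pow]

end SI
end QuiverSAGBI

namespace QuiverSAGBI
open MvPolynomial

/-- Indexing of the variables by a label of `T⁻` and a row of `T⁻`. -/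
def varM (K r0 r1 : ℕ) : (Fin K ×ₗ Fin r1) × Fin r0 ≃ KVar K r0 r1 where
  toFun s := ((ofLex s.1).1, (ofLex s.1).2, s.2)
  invFun v := (toLex (v.1, v.2.1), v.2.2)
  left_inv _ := rfl
  right_inv _ := rfl

/-- Indexing of the variables by a label of `T⁺` and a row of `T⁺`. -/
def varP (K r0 r1 : ℕ) : (Fin K ×ₗ Fin r0) × Fin r1 ≃ KVar K r0 r1 where
  toFun s := ((ofLex s.1).1, s.2, (ofLex s.1).2)
  invFun v := (toLex (v.1, v.2.2), v.2.1)
  left_inv _ := rfl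
  right_inv _ := rfl

theorem varM_apply {K r0 r1 : ℕ} (b : Fin K ×ₗ Fin r1) (p : Fin r0) :
    varM K r0 r1 (b, p) = ((ofLex b).1, (ofLex b).2, p) := rfl

theorem varP_apply {K r0 r1 : ℕ} (b : Fin K ×ₗ Fin r0) (p : Fin r1) :
    varP K r0 r1 (b, p) = ((ofLex b).1, p, (ofLex b).2) := rfl

theorem exists_LM {K r0 r1 : ℕ} (f : KPoly K r0 r1) (hf : f ≠ 0) : ∃ u, IsLM f u := by
  have hne : f.support.Nonempty := by
    rwa [Finset.nonempty_iff_ne_empty, Ne, support_eq_empty]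
  let φ : (KVar K r0 r1 →₀ ℕ) → Lex ((Fin K ×ₗ (Fin r1 ×ₗ Fin r0)) → ℕ) := fun u =>
    toLex fun v => u ((ofLex v).1, (ofLex (ofLex v).2).1, (ofLex (ofLex v).2).2)
  obtain ⟨u, hu, hmax⟩ := Finset.exists_max_image f.support φ hne
  refine ⟨u, hu, fun w hw => ?_⟩
  rcases (hmax w hw).eq_or_lt with h | h
  · left
    ext ⟨i, j, k⟩
    exact congrFun (congrArg ofLex h) (toLex (i, toLex (j, k)))
  · right
    obtain ⟨v, hag, hlt⟩ := h
    refine ⟨((ofLex v).1, (ofLex (ofLex v).2).1, (ofLex (ofLex v).2).2), hlt, ?_⟩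
    rintro ⟨i, j, k⟩ hg
    refine hag (toLex (i, toLex (j, k))) (Prod.Lex.lt_iff.2 ?_)
    rcases hg with h | ⟨h, h'⟩
    · exact Or.inl h
    · refine Or.inr ⟨h, ?_⟩
      exact Prod.Lex.lt_iff.2 h'

theorem sum_single {σ : Type*} [Fintype σ] [DecidableEq σ] (u : σ →₀ ℕ) :
    ∑ z : (Σ v, Fin (u v)), Finsupp.single z.1 1 = u := by
  rw [Fintype.sum_sigma]
  ext v
  simp

theorem statement7 (K r0 r1 : ℕ) (hK : 1 ≤ K) (h0 : 1 ≤ r0) (h1 : 1 ≤ r1)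
    (f : KPoly K r0 r1) (w0 w1 : ℤ) (hsi : IsSemiInvariant f w0 w1)
    (hf : f ≠ 0) :
    ∃ (cm cp : ℕ) (L : LinkedPair K r0 r1 cm cp),
      IsSemiStandardPair L ∧ monExpP L = monExpM L ∧ IsLM f (monExpP L) := by
  obtain ⟨u, hu⟩ := exists_LM f hf
  have pow2 : ∀ a b : ℕ, (2 : ℂ) ^ a = 2 ^ b → a = b := by
    intro a b h
    exact Nat.pow_right_injective le_rfl (by exact_mod_cast h : 2 ^ a = 2 ^ b)
  obtain ⟨Tm, qm, hm1, hm2, hm3, hm4⟩ := exists_tab (varM K r0 r1) u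
    (n := ∑ b, u (varM K r0 r1 (b, ⟨0, h0⟩)))
    (fun p => pow2 _ _ ((colW hsi u hu.1 p).trans (colW hsi u hu.1 ⟨0, h0⟩).symm))
    (fun p p' hp a => by
      refine ballot_poly (fun b => varM K r0 r1 (b, p)) (fun b => varM K r0 r1 (b, p'))
        ?_ ?_ ?_ ?_ ?_ f u hu (colD hsi p p' hp.ne) a
      · intro b b' h
        exact congrArg Prod.fst ((varM K r0 r1).injective h)
      · intro b b' h
        exact congrArg Prod.fst ((varM K r0 r1).injective h)
      · intro b b' h
        exact hp.ne (congrArg Prod.snd ((varM K r0 r1).injective h))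
      · intro b b' h
        rw [Prod.Lex.lt_iff] at h
        rcases h with h | ⟨h, h'⟩
        · exact Or.inl h
        · exact Or.inr ⟨h, Or.inl h'⟩
      · intro b b' h
        rw [Prod.Lex.le_iff] at h
        rcases h with h | ⟨h, h'⟩
        · exact Or.inl h
        · rcases h'.lt_or_eq with h' | h'
          · exact Or.inr ⟨h, Or.inl h'⟩
          · exact Or.inr ⟨h, Or.inr ⟨h', hp⟩⟩)
  obtain ⟨Tp, qp, hp1, hp2, hp3, hp4⟩ := exists_tab (varP K r0 r1) u
    (n := ∑ b, u (varP K r0 r1 (b, ⟨0, h1⟩)))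
    (fun p => pow2 _ _ ((rowW hsi u hu.1 p).trans (rowW hsi u hu.1 ⟨0, h1⟩).symm))
    (fun p p' hp a => by
      refine ballot_poly (fun b => varP K r0 r1 (b, p)) (fun b => varP K r0 r1 (b, p'))
        ?_ ?_ ?_ ?_ ?_ f u hu (rowD hsi p p' hp.ne) a
      · intro b b' h
        exact congrArg Prod.fst ((varP K r0 r1).injective h)
      · intro b b' h
        exact congrArg Prod.fst ((varP K r0 r1).injective h)
      · intro b b' h
        exact hp.ne (congrArg Prod.snd ((varP K r0 r1).injective h))
      · intro b b' h
        rw [Prod.Lex.lt_iff] at h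
        rcases h with h | ⟨h, h'⟩
        · exact Or.inl h
        · exact Or.inr ⟨h, Or.inr ⟨rfl, h'⟩⟩
      · intro b b' h
        rw [Prod.Lex.le_iff] at h
        rcases h with h | ⟨h, h'⟩
        · exact Or.inl h
        · exact Or.inr ⟨h, Or.inl hp⟩)
  generalize (∑ b, u (varM K r0 r1 (b, ⟨0, h0⟩))) = cm at *
  generalize (∑ b, u (varP K r0 r1 (b, ⟨0, h1⟩))) = cp at *
  have hlink : ∀ p c, varP K r0 r1 (Tp ((qm.trans qp.symm) (p, c)).1
      ((qm.trans qp.symm) (p, c)).2, ((qm.trans qp.symm) (p, c)).1)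
      = varM K r0 r1 (Tm p c, p) := by
    intro p c
    rw [← hp1, ← hm1]
    simp
  let L : LinkedPair K r0 r1 cm cp :=
    { Tm := fun p c => ofLex (Tm p c)
      Tp := fun p c => ofLex (Tp p c)
      link := qm.trans qp.symm
      link_row := fun p c => congrArg (fun v : KVar K r0 r1 => v.2.1) (hlink p c)
      link_label := fun p c => congrArg (fun v : KVar K r0 r1 => (v.1, v.2.2)) (hlink p c) }
  have hM : monExpM L = u := by
    rw [monExpM, ← Fintype.sum_prod_type', ← sum_single u, ← qm.sum_comp]
    refine Finset.sum_congr rfl fun z _ => ?_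
    rw [hm1]; rfl
  have hP : monExpP L = u := by
    rw [monExpP, ← Fintype.sum_prod_type', ← sum_single u, ← qp.sum_comp]
    refine Finset.sum_congr rfl fun z _ => ?_
    rw [hp1]; rfl
  refine ⟨cm, cp, L, ⟨⟨?_, ?_⟩, ⟨?_, ?_⟩, ?_⟩, hP.trans hM.symm, hP ▸ hu⟩
  · intro p c c' h
    exact Prod.Lex.le_iff.1 (hm2 p c c' h)
  · intro c p p' h
    exact Prod.Lex.lt_iff.1 (hm3 c p p' h)
  · intro p c c' h
    exact Prod.Lex.le_iff.1 (hp2 p c c' h)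
  · intro c p p' h
    exact Prod.Lex.lt_iff.1 (hp3 c p p' h)
  · intro p c c' hT hc
    have hT' : Tm p c = Tm p c' := hT
    obtain ⟨v, k, hk⟩ : ∃ v k, qm (p, c) = ⟨v, k⟩ := ⟨_, _, rfl⟩
    obtain ⟨v', k', hk'⟩ : ∃ v k, qm (p, c') = ⟨v, k⟩ := ⟨_, _, rfl⟩
    have hvv : v' = v := by
      have e1 := hm1 p c
      have e2 := hm1 p c'
      rw [hk] at e1
      rw [hk', ← hT'] at e2
      exact e2.trans e1.symm
    subst hvv
    have hkk := (hm4 p c c' v' k k' hk hk').1 hc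
    change (qp.symm (qm (p, c))).2 < (qp.symm (qm (p, c'))).2
    rw [hk, hk']
    obtain ⟨⟨s, d⟩, hz⟩ : ∃ z, qp z = ⟨v', k⟩ := qp.surjective _
    obtain ⟨⟨s', d'⟩, hz'⟩ : ∃ z, qp z = ⟨v', k'⟩ := qp.surjective _
    have hs : s' = s := by
      have e1 := hp1 s d
      have e2 := hp1 s' d'
      rw [hz] at e1
      rw [hz'] at e2
      exact congrArg Prod.snd ((varP K r0 r1).injective (e2.symm.trans e1))
    subst hs
    rw [← hz, ← hz', Equiv.symm_apply_apply, Equiv.symm_apply_apply]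
    exact (hp4 s' d d' v' k k' hz hz').2 hkk

end QuiverSAGBI
end

section
/- Let (T^-, T^+, σ) be a semi-standard linked tableaux pair for the generalized Kronecker quiver. Then f_{T^±} ≠ 0 and its leading monomial is Mon(T^+) = Mon(T^-). -/
namespace QuiverSAGBI

/-- Column-strictness data for one of the two tableaux, in terms of its boxes. -/
structure ColStrict {E : Type*} (i q p : E → ℕ) (c : E → ℕ) : Prop where
  inj : ∀ e f, c e = c f → q e = q f → e = f
  down : ∀ e a, a ≤ q e → ∃ f, c f = c e ∧ q f = a
  strict : ∀ e f, c e = c f → q e < q f → i e < i f ∨ (i e = i f ∧ p e < p f)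

lemma ColStrict.diag {E : Type*} {i q p : E → ℕ} {c : E → ℕ} (h : ColStrict i q p c) :
    ∀ (n : ℕ) (e f : E), q f - q e = n → c e = c f → i e = i f → q e ≤ q f →
      q f + p e ≤ q e + p f := by
  intro n
  induction n with
  | zero =>
    intro e f hn hc hi hq
    have : q e = q f := by omega
    have := h.inj e f hc this
    subst this; omega
  | succ n ih =>
    intro e f hn hc hi hq
    obtain ⟨g, hg, hqg⟩ := h.down f (q f - 1) (by omega)
    have h1 := h.strict g f hg (by omega)
    have hi2 : i e ≤ i g := by
      rcases Nat.lt_or_ge (q e) (q g) with h2 | h2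
      · have := h.strict e g (by omega) h2
        omega
      · have := h.inj e g (by omega) (by omega)
        subst this; rfl
    have := ih e g (by omega) (by omega) (by omega) (by omega)
    omega

lemma ColStrict.diag' {E : Type*} {i q p : E → ℕ} {c : E → ℕ} (h : ColStrict i q p c)
    (e f : E) (hc : c e = c f) (hi : i e = i f) (hq : q e ≤ q f) :
    q f + p e ≤ q e + p f := h.diag _ e f rfl hc hi hq

lemma ColStrict.le {E : Type*} {i q p : E → ℕ} {c : E → ℕ} (h : ColStrict i q p c)
    (e f : E) (hc : c e = c f) (hq : q e ≤ q f) :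
    i e < i f ∨ (i e = i f ∧ p e ≤ p f) := by
  rcases Nat.lt_or_ge (q e) (q f) with h2 | h2
  · have := h.strict e f hc h2
    omega
  · have := h.inj e f hc (by omega)
    subst this; omega

/-- The four cases of the cut argument. -/
lemma cut_cases {E : Type*} {i q p c l : E → ℕ}
    (hp : ColStrict i q p c) (hm : ColStrict i p q l) (j q0 p0 : ℕ) (e : E) (he : i e = j)
    (A B : E → Prop)
    (hA : ∀ e, A e ↔ ∃ h, c h = c e ∧ q0 ≤ q h ∧ (i h < j ∨ (i h = j ∧ p h ≤ p0)))
    (hB : ∀ e, B e ↔ ∃ h, l h = l e ∧ p0 < p h ∧ (i h < j ∨ (i h = j ∧ q h ≤ q0))) :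
    (q e ≤ q0 ∧ p e ≤ p0 ∧ ¬ (A e ∧ B e)) ∨
    (q e ≤ q0 ∧ p0 < p e ∧ ¬ A e ∧ B e) ∨
    (q0 < q e ∧ p e ≤ p0 ∧ A e ∧ ¬ B e) ∨
    (q0 < q e ∧ p0 < p e ∧ (A e ∨ B e)) := by
  rcases Nat.lt_or_ge q0 (q e) with hq | hq <;> rcases Nat.lt_or_ge p0 (p e) with hpp | hpp
  · refine Or.inr (Or.inr (Or.inr ⟨hq, hpp, ?_⟩))
    by_contra hcon
    push Not at hcon
    obtain ⟨hnA, hnB⟩ := hcon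
    rw [hA] at hnA
    rw [hB] at hnB
    push Not at hnA hnB
    obtain ⟨f, hf, hqf⟩ := hp.down e q0 hq.le
    obtain ⟨g, hg, hpg⟩ := hm.down e (p0 + 1) hpp
    have h1 := hnA f hf (by omega)
    have h2 := hnB g hg (by omega)
    have h3 := hp.strict f e hf (by omega)
    have h4 := hm.le g e hg (by omega)
    have h5 := hp.diag' f e hf (by omega) (by omega)
    have h6 := hm.diag' g e hg (by omega) (by omega)
    have := h1.2 (by omega)
    have := h2.2 (by omega)
    omega
  · refine Or.inr (Or.inr (Or.inl ⟨hq, hpp, ?_, ?_⟩))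
    · rw [hA]; exact ⟨e, rfl, hq.le, Or.inr ⟨he, hpp⟩⟩
    · rw [hB]; rintro ⟨g, hg, hpg, h⟩
      have := hm.strict e g hg.symm (by omega)
      omega
  · refine Or.inr (Or.inl ⟨hq, hpp, ?_, ?_⟩)
    · rw [hA]; rintro ⟨g, hg, hpg, h⟩
      have := hp.le e g hg.symm (by omega)
      omega
    · rw [hB]; exact ⟨e, rfl, hpp, Or.inr ⟨he, hq⟩⟩
  · refine Or.inl ⟨hq, hpp, ?_⟩
    rw [hA, hB]
    rintro ⟨⟨f, hf, hqf, h1⟩, ⟨g, hg, hpg, h2⟩⟩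
    have h3 := hp.le e f hf.symm (by omega)
    have h4 := hm.le e g hg.symm (by omega)
    have h5 := hp.diag' e f hf.symm (by omega) (by omega)
    have h6 := hm.diag' e g hg.symm (by omega) (by omega)
    omega

/-- The number of boxes of color `j` in chosen columns that are moved into the first rows does
not increase. -/
lemma slot_le {E : Type*} [Fintype E] [DecidableEq E] {i q p c : E → ℕ}
    (hp : ColStrict i q p c) (f : Equiv.Perm E) (hf : ∀ e, c (f e) = c e) (j q0 : ℕ)
    (hS : ∀ e, i (f e) < j → i e < j) (A : E → Prop) [DecidablePred A]
    (hA : ∀ e e', c e = c e' → (A e ↔ A e')) :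
    (Finset.univ.filter fun e => i e = j ∧ q (f e) ≤ q0 ∧ A e).card ≤
      (Finset.univ.filter fun e => i e = j ∧ q e ≤ q0 ∧ A e).card := by
  classical
  let G : E → Prop := fun e => ∀ h, c h = c e → q h ≤ q0 → i h ≤ j
  have hG : ∀ e e', c e = c e' → (G e ↔ G e') := by
    intro e e' h; simp only [G, h]
  have split : ∀ (P : E → Prop) [DecidablePred P], (Finset.univ.filter P).card =
      (Finset.univ.filter fun e => P e ∧ G e).card +
      (Finset.univ.filter fun e => P e ∧ ¬ G e).card := by
    intro P _
    rw [← Finset.card_filter_add_card_filter_not (s := Finset.univ.filter P) G,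
      Finset.filter_filter, Finset.filter_filter]
  rw [split, split (fun e => i e = j ∧ q e ≤ q0 ∧ A e)]
  apply add_le_add
  · apply Finset.card_le_card_of_injOn f
    · intro e he
      simp only [Finset.coe_filter, Finset.mem_univ, true_and, Set.mem_ofPred_eq] at he ⊢
      obtain ⟨⟨h1, h2, h3⟩, h4⟩ := he
      refine ⟨⟨?_, h2, (hA _ _ (hf e)).2 h3⟩, (hG _ _ (hf e)).2 h4⟩
      have := h4 (f e) (hf e) h2
      have := hS e
      omega
    · exact f.injective.injOn
  · apply Finset.card_le_card
    intro e
    simp only [Finset.mem_filter, Finset.mem_univ, true_and]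
    rintro ⟨⟨h1, h2, h3⟩, h4⟩
    refine ⟨⟨h1, ?_, h3⟩, h4⟩
    by_contra hlt
    apply h4
    intro h hh hq
    have := hp.strict h e hh (by omega)
    omega

/-- Dominance, together with what equality means. -/
lemma dominance {E : Type*} [Fintype E] [DecidableEq E] {i q p c l : E → ℕ}
    (hp : ColStrict i q p c) (hm : ColStrict i p q l)
    (f g : Equiv.Perm E) (hf : ∀ e, c (f e) = c e) (hg : ∀ e, l (g e) = l e) (j q0 p0 : ℕ)
    (hSf : ∀ e, i (f e) < j → i e < j) (hSg : ∀ e, i (g e) < j → i e < j) :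
    (Finset.univ.filter fun e => i e = j ∧ q (f e) ≤ q0 ∧ p (g e) ≤ p0).card ≤
      (Finset.univ.filter fun e => i e = j ∧ q e ≤ q0 ∧ p e ≤ p0).card ∧
    ((Finset.univ.filter fun e => i e = j ∧ q (f e) ≤ q0 ∧ p (g e) ≤ p0).card =
      (Finset.univ.filter fun e => i e = j ∧ q e ≤ q0 ∧ p e ≤ p0).card →
      ∀ e, i e = j → q (f e) ≤ q0 →
        (∃ h, c h = c e ∧ q0 ≤ q h ∧ (i h < j ∨ (i h = j ∧ p h ≤ p0))) → p (g e) ≤ p0) := by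
  classical
  let A : E → Prop := fun e => ∃ h, c h = c e ∧ q0 ≤ q h ∧ (i h < j ∨ (i h = j ∧ p h ≤ p0))
  let B : E → Prop := fun e => ∃ h, l h = l e ∧ p0 < p h ∧ (i h < j ∨ (i h = j ∧ q h ≤ q0))
  have hcut := fun e he => cut_cases hp hm j q0 p0 e he A B (fun _ => Iff.rfl) (fun _ => Iff.rfl)
  have hsA := slot_le hp f hf j q0 hSf A (by intro e e' h; simp only [A, h])
  have hsB := slot_le hm g hg j p0 hSg B (by intro e e' h; simp only [B, h])
  have e1 : (Finset.univ.filter fun e => i e = j ∧ q e ≤ q0 ∧ p e ≤ p0).card =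
      (Finset.univ.filter fun e => i e = j ∧ q e ≤ q0 ∧ A e).card +
      (Finset.univ.filter fun e => i e = j ∧ p e ≤ p0 ∧ B e).card +
      (Finset.univ.filter fun e => i e = j ∧ ¬ A e ∧ ¬ B e).card := by
    simp only [Finset.card_filter, ← Finset.sum_add_distrib]
    apply Finset.sum_congr rfl
    intro e _
    by_cases he : i e = j
    · have := hcut e he
      by_cases hq : q e ≤ q0 <;> by_cases hpp : p e ≤ p0 <;> by_cases hA : A e <;>
        by_cases hB : B e <;> simp [he, hq, hpp, hA, hB] at this ⊢ <;> omega
    · simp [he]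
  have e2 : ∀ e, (if i e = j ∧ q (f e) ≤ q0 ∧ p (g e) ≤ p0 then 1 else 0) ≤
      (if i e = j ∧ q (f e) ≤ q0 ∧ A e then 1 else 0) +
      (if i e = j ∧ p (g e) ≤ p0 ∧ B e then 1 else 0) +
      (if i e = j ∧ ¬ A e ∧ ¬ B e then 1 else 0) := by
    intro e
    by_cases he : i e = j <;> by_cases hq : q (f e) ≤ q0 <;> by_cases hpp : p (g e) ≤ p0 <;>
      by_cases hA : A e <;> by_cases hB : B e <;> simp [he, hq, hpp, hA, hB]
  have e3 := Finset.sum_le_sum (s := Finset.univ) (fun e _ => e2 e)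
  simp only [Finset.sum_add_distrib] at e3
  simp only [Finset.card_filter] at hsA hsB e1 ⊢
  refine ⟨by omega, ?_⟩
  intro heq e he hq hAe
  by_contra hpp
  have e4 := Finset.sum_lt_sum (s := Finset.univ) (fun e _ => e2 e) ⟨e, Finset.mem_univ _, by
    have hA : A e := hAe
    simp [he, hq, hpp, hA]⟩
  simp only [Finset.sum_add_distrib] at e4
  omega

/-- Colors `< j` are kept if the row sum over these colors is kept. -/
lemma color_keep {E : Type*} [Fintype E] [DecidableEq E] {i q p c : E → ℕ}
    (hp : ColStrict i q p c) (f : Equiv.Perm E) (hf : ∀ e, c (f e) = c e) (j : ℕ)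
    (hsum : ∑ e with i e < j, q (f e) = ∑ e with i e < j, q e) (e : E) :
    i (f e) < j → i e < j := by
  classical
  let k : ℕ → ℕ := fun a => (Finset.univ.filter fun e => i e < j ∧ c e = a).sup fun e => q e + 1
  have hk : ∀ e, i e < j ↔ q e < k (c e) := by
    intro e
    constructor
    · intro h
      have : q e + 1 ≤ k (c e) := Finset.le_sup (f := fun e => q e + 1) (by simp [h])
      omega
    · intro h
      obtain ⟨g, hg, h2⟩ := (Finset.lt_sup_iff).1 h
      simp only [Finset.mem_filter, Finset.mem_univ, true_and] at hg
      have := hp.le e g hg.2.symm (by omega)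
      omega
  let h : E → ℤ := fun e => (q e : ℤ) - k (c e)
  have hneg : ∀ e, i e < j ↔ h e < 0 := by
    intro e; rw [hk]; simp only [h]; omega
  have hs : ∑ e with i e < j, h (f e) = ∑ e with i e < j, h e := by
    simp only [h, hf, Finset.sum_sub_distrib]
    have := congrArg (fun n : ℕ => (n : ℤ)) hsum
    push_cast at this
    rw [this]
  by_contra hcon
  push Not at hcon
  obtain ⟨h1, h2⟩ := hcon
  have hs2 : ∑ e with i e < j, h e = ∑ e with i (f e) < j, h (f e) := by
    simp only [Finset.sum_filter]
    exact (Equiv.sum_comp f (fun e => if i e < j then h e else 0)).symm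
  rw [hs2] at hs
  simp only [Finset.sum_filter] at hs
  have : ∑ a, (if i (f a) < j then h (f a) else 0) < ∑ a, (if i a < j then h (f a) else 0) := by
    apply Finset.sum_lt_sum
    · intro a _
      have := hneg (f a)
      split_ifs <;> omega
    · refine ⟨e, Finset.mem_univ _, ?_⟩
      have := hneg (f e)
      rw [if_pos h1, if_neg (by omega)]
      omega
  omega

/-- The rearrangement step: a permutation preserving `V`, along whose fibers `l` and `c` are
strictly comonotone, and preserving `∑ l c`, is trivial. -/
lemma rearr {E : Type*} [Fintype E] [DecidableEq E] (V l c : E → ℕ) (φ : Equiv.Perm E)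
    (hV : ∀ e, V (φ e) = V e)
    (hinj : ∀ e f, V e = V f → l e = l f → e = f)
    (hmono : ∀ e f, V e = V f → l e < l f → c e < c f)
    (hsum : ∑ e, l (φ e) * c e = ∑ e, l e * c e) : φ = 1 := by
  obtain ⟨N, hN⟩ : ∃ N, ∀ e, l e < N ∧ c e < N := by
    refine ⟨(Finset.univ.sup l) + (Finset.univ.sup c) + 1, fun e => ?_⟩
    have h1 := Finset.le_sup (f := l) (Finset.mem_univ e)
    have h2 := Finset.le_sup (f := c) (Finset.mem_univ e)
    omega
  let F : E → ℕ := fun e => l e + N * V e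
  let G : E → ℕ := fun e => c e + N * V e
  have key : ∀ e f, V e < V f → F e < F f ∧ G e < G f := by
    intro e f h
    have h1 := hN e
    have h2 : N * (V e + 1) ≤ N * V f := Nat.mul_le_mul_left _ h
    simp only [F, G]
    rw [Nat.mul_add] at h2
    omega
  have hFG : ∀ e f, F e < F f → G e < G f := by
    intro e f h
    rcases lt_trichotomy (V e) (V f) with h1 | h1 | h1
    · exact (key e f h1).2
    · have := hmono e f h1 (by simp only [F, h1] at h; omega)
      simp only [G, h1]; omega
    · have := (key f e h1).1
      omega
  have hF : Function.Injective F := by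
    intro e f h
    rcases lt_trichotomy (V e) (V f) with h1 | h1 | h1
    · have := (key e f h1).1; omega
    · exact hinj e f h1 (by simp only [F, h1] at h; omega)
    · have := (key f e h1).1; omega
  have hmv : Monovary F G := by
    intro e f h
    by_contra hlt
    have := hFG f e (by omega)
    omega
  have hs : ∑ e, F (φ e) * G e = ∑ e, F e * G e := by
    have a1 : ∀ e, F (φ e) * G e = l (φ e) * c e + N * (V e * c e) +
        N * (l (φ e) * V (φ e)) + N * N * (V e * V e) := by
      intro e; simp only [F, G, hV]; ring
    have a2 : ∀ e, F e * G e = l e * c e + N * (V e * c e) +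
        N * (l e * V e) + N * N * (V e * V e) := by
      intro e; simp only [F, G]; ring
    simp only [a1, a2, Finset.sum_add_distrib, hsum]
    rw [Equiv.sum_comp φ (fun e => N * (l e * V e))]
  have hmv2 : Monovary (F ∘ φ) G := (hmv.sum_comp_perm_mul_eq_sum_mul_iff).1 hs
  have hst : ∀ e f, F e < F f → F (φ e) < F (φ f) := by
    intro e f h
    have h1 : F (φ e) ≤ F (φ f) := hmv2 (hFG e f h)
    have h2 : F (φ e) ≠ F (φ f) := by
      intro h3
      have := φ.injective (hF h3)
      subst this; omega
    omega
  have hle : ∀ n e, F e = n → n ≤ F (φ e) := by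
    intro n
    induction n using Nat.strong_induction_on with
    | _ n ih =>
      intro e he
      by_contra hlt
      push Not at hlt
      have h1 := ih _ hlt (φ e) rfl
      have h2 := hst (φ e) e (by omega)
      omega
  have heq : ∀ e, F e = F (φ e) := by
    have hs3 : ∑ e, F e = ∑ e, F (φ e) := (Equiv.sum_comp φ F).symm
    intro e
    exact (Finset.sum_eq_sum_iff_of_le (fun e _ => hle _ e rfl)).1 hs3 e (Finset.mem_univ e)
  ext e
  exact (hF (heq e)).symm

/-- Equal fiber counts give equal sums. -/
lemma sum_eq_of_counts {E W : Type*} [Fintype E] [Fintype W] [DecidableEq W]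
    (V V' : E → W) (P : W → Prop) [DecidablePred P] (F : W → ℕ)
    (h : ∀ v, P v → (Finset.univ.filter fun e => V' e = v).card =
      (Finset.univ.filter fun e => V e = v).card) :
    ∑ e with P (V' e), F (V' e) = ∑ e with P (V e), F (V e) := by
  have key : ∀ U : E → W, ∑ e with P (U e), F (U e) =
      ∑ v : W, if P v then (Finset.univ.filter fun e => U e = v).card * F v else 0 := by
    intro U
    rw [Finset.sum_filter, ← Finset.sum_fiberwise Finset.univ U]
    apply Finset.sum_congr rfl
    intro v _
    rw [Finset.sum_congr rfl (g := fun _ => if P v then F v else 0)]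
    · split_ifs <;> simp
    · intro e he
      simp only [Finset.mem_filter, Finset.mem_univ, true_and] at he
      rw [he]
  rw [key, key]
  apply Finset.sum_congr rfl
  intro v _
  split_ifs with hv
  · rw [h v hv]
  · rfl

section main
variable {K r0 r1 cm cp : ℕ} (L : LinkedPair K r0 r1 cm cp)

/-- color of a box -/
def bi (e : Fin r0 × Fin cm) : ℕ := (L.Tm e.1 e.2).1
/-- row of the linked box -/
def bq (e : Fin r0 × Fin cm) : ℕ := (L.link e).1
/-- row of a box -/
def bp (e : Fin r0 × Fin cm) : ℕ := e.1
/-- column of the linked box -/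
def bc (e : Fin r0 × Fin cm) : ℕ := (L.link e).2
/-- column of a box -/
def bl (e : Fin r0 × Fin cm) : ℕ := e.2

/-- the moved variable of a box -/
def bV (αm : Fin cm → Equiv.Perm (Fin r0)) (αp : Fin cp → Equiv.Perm (Fin r1))
    (e : Fin r0 × Fin cm) : KVar K r0 r1 :=
  ((L.Tm e.1 e.2).1, αp (L.link e).2 (L.link e).1, αm e.2 e.1)

/-- box permutation from `α⁺` -/
def bf (αp : Fin cp → Equiv.Perm (Fin r1)) : Equiv.Perm (Fin r0 × Fin cm) :=
  (L.link.trans (Equiv.prodCongrLeft αp)).trans L.link.symm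

/-- box permutation from `α⁻` -/
def bg (αm : Fin cm → Equiv.Perm (Fin r0)) : Equiv.Perm (Fin r0 × Fin cm) :=
  Equiv.prodCongrLeft αm

lemma link_bf (αp : Fin cp → Equiv.Perm (Fin r1)) (e : Fin r0 × Fin cm) :
    L.link (bf L αp e) = (αp (L.link e).2 (L.link e).1, (L.link e).2) := by
  simp [bf, Equiv.prodCongrLeft]

lemma bc_bf (αp : Fin cp → Equiv.Perm (Fin r1)) (e : Fin r0 × Fin cm) :
    bc L (bf L αp e) = bc L e := by simp [bc, link_bf]

lemma bq_bf (αp : Fin cp → Equiv.Perm (Fin r1)) (e : Fin r0 × Fin cm) :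
    bq L (bf L αp e) = αp (L.link e).2 (L.link e).1 := by simp [bq, link_bf]

lemma bl_bg (αm : Fin cm → Equiv.Perm (Fin r0)) (e : Fin r0 × Fin cm) :
    bl (bg αm e) = bl e := by simp [bl, bg, Equiv.prodCongrLeft]

lemma bp_bg (αm : Fin cm → Equiv.Perm (Fin r0)) (e : Fin r0 × Fin cm) :
    bp (bg αm e) = αm e.2 e.1 := by simp [bp, bg, Equiv.prodCongrLeft]

lemma Tp_link (e : Fin r0 × Fin cm) :
    L.Tp (L.link e).1 (L.link e).2 = ((L.Tm e.1 e.2).1, e.1) := L.link_label e.1 e.2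

lemma Tm_eq (e : Fin r0 × Fin cm) :
    L.Tm e.1 e.2 = ((L.Tm e.1 e.2).1, (L.link e).1) := by
  rw [L.link_row e.1 e.2]

lemma colP (hss : IsSemiStandardPair L) : ColStrict (bi L) (bq L) bp (bc L) where
  inj e f h1 h2 := by
    apply L.link.injective
    exact Prod.ext (Fin.ext h2) (Fin.ext h1)
  down e a ha := by
    have : a < r1 := lt_of_le_of_lt ha (L.link e).1.2
    exact ⟨L.link.symm (⟨a, this⟩, (L.link e).2), by simp [bc], by simp [bq]⟩
  strict e f hc hq := by
    have := hss.2.1.2 (L.link e).2 (L.link e).1 (L.link f).1 hq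
    rw [Tp_link] at this
    have h2 : (L.link e).2 = (L.link f).2 := Fin.ext hc
    rw [h2, Tp_link] at this
    rcases this with h | ⟨h, h'⟩
    · exact Or.inl h
    · exact Or.inr ⟨congrArg Fin.val h, h'⟩

lemma colM (hss : IsSemiStandardPair L) : ColStrict (bi L) bp (bq L) bl where
  inj e f h1 h2 := Prod.ext (Fin.ext h2) (Fin.ext h1)
  down e a ha := by
    have : a < r0 := lt_of_le_of_lt ha e.1.2
    exact ⟨(⟨a, this⟩, e.2), by simp [bl], by simp [bp]⟩
  strict e f hc hq := by
    have := hss.1.2 e.2 e.1 f.1 hq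
    rw [Tm_eq] at this
    have h2 : e.2 = f.2 := Fin.ext hc
    rw [h2, Tm_eq L f] at this
    rcases this with h | ⟨h, h'⟩
    · left
      simpa [bi, h2] using h
    · right
      exact ⟨by simpa [bi, h2] using congrArg Fin.val h, h'⟩

/-- Number of boxes mapped to a variable. -/
def cnt (V : Fin r0 × Fin cm → KVar K r0 r1) (v : KVar K r0 r1) : ℕ :=
  (Finset.univ.filter fun e => V e = v).card

lemma keepColors (hss : IsSemiStandardPair L) (αm : Fin cm → Equiv.Perm (Fin r0))
    (αp : Fin cp → Equiv.Perm (Fin r1)) (j : ℕ)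
    (h : ∀ v : KVar K r0 r1, v.1.val < j → cnt (bV L αm αp) v = cnt (bV L 1 1) v) :
    (∀ e, bi L (bf L αp e) < j → bi L e < j) ∧ (∀ e, bi L (bg αm e) < j → bi L e < j) := by
  constructor
  · apply color_keep (colP L hss) (bf L αp) (bc_bf L αp)
    have := sum_eq_of_counts (bV L 1 1) (bV L αm αp) (fun v => v.1.val < j)
      (fun v => v.2.1.val) h
    simp only [bq_bf]
    exact this
  · apply color_keep (colM L hss) (bg αm) (bl_bg αm)
    have := sum_eq_of_counts (bV L 1 1) (bV L αm αp) (fun v => v.1.val < j)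
      (fun v => v.2.2.val) h
    simp only [bp_bg]
    exact this

/-- At the first variable where they differ the original exponent is larger. -/
lemma first_diff (hss : IsSemiStandardPair L) (αm : Fin cm → Equiv.Perm (Fin r0))
    (αp : Fin cp → Equiv.Perm (Fin r1)) (v : KVar K r0 r1)
    (h : ∀ w : KVar K r0 r1, VarGT w v → cnt (bV L αm αp) w = cnt (bV L 1 1) w) :
    cnt (bV L αm αp) v ≤ cnt (bV L 1 1) v := by
  have hk := keepColors L hss αm αp v.1 (fun w hw => h w (Or.inl hw))
  have hd := (dominance (colP L hss) (colM L hss) (bf L αp) (bg αm) (bc_bf L αp) (bl_bg αm)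
    v.1 v.2.1 v.2.2 hk.1 hk.2).1
  have hs := sum_eq_of_counts (bV L 1 1) (bV L αm αp)
    (fun w => (w.1.val = v.1.val ∧ w.2.1.val ≤ v.2.1.val ∧ w.2.2.val ≤ v.2.2.val) ∧ w ≠ v)
    (fun _ => 1) (by
      rintro w ⟨⟨h1, h2, h3⟩, h4⟩
      apply h
      right
      refine ⟨Fin.ext h1, ?_⟩
      rcases Nat.lt_or_ge w.2.1.val v.2.1.val with h5 | h5
      · exact Or.inl h5
      · right
        have h6 : w.2.1 = v.2.1 := Fin.ext (by omega)
        refine ⟨h6, lt_of_le_of_ne h3 ?_⟩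
        intro h7
        exact h4 (Prod.ext (Fin.ext h1) (Prod.ext h6 h7)))
  have hsplit : ∀ U : Fin r0 × Fin cm → KVar K r0 r1,
      (Finset.univ.filter fun e => ((U e).1.val = v.1.val ∧ (U e).2.1.val ≤ v.2.1.val ∧
        (U e).2.2.val ≤ v.2.2.val)).card = cnt U v +
      (Finset.univ.filter fun e => ((U e).1.val = v.1.val ∧ (U e).2.1.val ≤ v.2.1.val ∧
        (U e).2.2.val ≤ v.2.2.val) ∧ U e ≠ v).card := by
    intro U
    rw [← Finset.card_filter_add_card_filter_not (s := Finset.univ.filter fun e =>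
      ((U e).1.val = v.1.val ∧ (U e).2.1.val ≤ v.2.1.val ∧
        (U e).2.2.val ≤ v.2.2.val)) (fun e => U e = v), Finset.filter_filter,
        Finset.filter_filter, cnt]
    congr 2
    ext e
    simp only [Finset.mem_filter, Finset.mem_univ, true_and]
    constructor
    · exact fun h => h.2
    · intro h; simp [h]
  have a1 := hsplit (bV L αm αp)
  have a2 := hsplit (bV L 1 1)
  simp only [Finset.sum_const, smul_eq_mul, mul_one] at hs
  have b1 : (Finset.univ.filter fun e => bi L e = v.1.val ∧ bq L (bf L αp e) ≤ v.2.1.val ∧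
      bp (bg αm e) ≤ v.2.2.val).card = (Finset.univ.filter fun e =>
      ((bV L αm αp e).1.val = v.1.val ∧ (bV L αm αp e).2.1.val ≤ v.2.1.val ∧
        (bV L αm αp e).2.2.val ≤ v.2.2.val)).card := by
    simp only [bq_bf, bp_bg]; rfl
  have b2 : (Finset.univ.filter fun e => bi L e = v.1.val ∧ bq L e ≤ v.2.1.val ∧
      bp e ≤ v.2.2.val).card = (Finset.univ.filter fun e =>
      ((bV L 1 1 e).1.val = v.1.val ∧ (bV L 1 1 e).2.1.val ≤ v.2.1.val ∧
        (bV L 1 1 e).2.2.val ≤ v.2.2.val)).card := rfl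
  omega

/-- If all exponents agree the two box permutations coincide. -/
lemma perm_eq (hss : IsSemiStandardPair L) (αm : Fin cm → Equiv.Perm (Fin r0))
    (αp : Fin cp → Equiv.Perm (Fin r1))
    (h : ∀ w : KVar K r0 r1, cnt (bV L αm αp) w = cnt (bV L 1 1) w) :
    bf L αp = bg αm := by
  have hk := fun j => keepColors L hss αm αp j (fun w _ => h w)
  have hP := colP L hss
  have hM := colM L hss
  -- colors are preserved
  have hif : ∀ e, bi L (bf L αp e) = bi L e := by
    have h1 : ∀ e, bi L e ≤ bi L (bf L αp e) := fun e => by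
      have := (hk (bi L (bf L αp e) + 1)).1 e (by omega)
      omega
    intro e
    exact ((Finset.sum_eq_sum_iff_of_le (fun e _ => h1 e)).1
      (Equiv.sum_comp (bf L αp) (bi L)).symm e (Finset.mem_univ e)).symm
  have hig : ∀ e, bi L (bg αm e) = bi L e := by
    have h1 : ∀ e, bi L e ≤ bi L (bg αm e) := fun e => by
      have := (hk (bi L (bg αm e) + 1)).2 e (by omega)
      omega
    intro e
    exact ((Finset.sum_eq_sum_iff_of_le (fun e _ => h1 e)).1
      (Equiv.sum_comp (bg αm) (bi L)).symm e (Finset.mem_univ e)).symm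
  have hN : ∀ j q0 p0, (Finset.univ.filter fun e => bi L e = j ∧ bq L (bf L αp e) ≤ q0 ∧
      bp (bg αm e) ≤ p0).card = (Finset.univ.filter fun e => bi L e = j ∧ bq L e ≤ q0 ∧
      bp e ≤ p0).card := by
    intro j q0 p0
    have := sum_eq_of_counts (bV L 1 1) (bV L αm αp)
      (fun w => w.1.val = j ∧ w.2.1.val ≤ q0 ∧ w.2.2.val ≤ p0) (fun _ => 1) (fun v _ => h v)
    simp only [Finset.sum_const, smul_eq_mul, mul_one] at this
    simp only [bq_bf, bp_bg]
    exact this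
  have hp : ∀ e, bp (bg αm e) = bp (bf L αp e) := by
    have h1 : ∀ e, bp (bg αm e) ≤ bp (bf L αp e) := fun e =>
      (dominance hP hM (bf L αp) (bg αm) (bc_bf L αp) (bl_bg αm) (bi L e) (bq L (bf L αp e))
        (bp (bf L αp e)) (hk _).1 (hk _).2).2 (hN _ _ _) e rfl le_rfl
        ⟨bf L αp e, bc_bf L αp e, le_rfl, Or.inr ⟨hif e, le_rfl⟩⟩
    intro e
    exact (Finset.sum_eq_sum_iff_of_le (fun e _ => h1 e)).1
      ((Equiv.sum_comp (bg αm) bp).trans (Equiv.sum_comp (bf L αp) bp).symm) e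
      (Finset.mem_univ e)
  have hN' : ∀ j p0 q0, (Finset.univ.filter fun e => bi L e = j ∧ bp (bg αm e) ≤ p0 ∧
      bq L (bf L αp e) ≤ q0).card = (Finset.univ.filter fun e => bi L e = j ∧ bp e ≤ p0 ∧
      bq L e ≤ q0).card := by
    intro j p0 q0
    have := hN j q0 p0
    simp only [and_comm (a := bp _ ≤ p0)]
    exact this
  have hq : ∀ e, bq L (bf L αp e) = bq L (bg αm e) := by
    have h1 : ∀ e, bq L (bf L αp e) ≤ bq L (bg αm e) := fun e =>
      (dominance hM hP (bg αm) (bf L αp) (bl_bg αm) (bc_bf L αp) (bi L e) (bp (bg αm e))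
        (bq L (bg αm e)) (hk _).2 (hk _).1).2 (hN' _ _ _) e rfl le_rfl
        ⟨bg αm e, bl_bg αm e, le_rfl, Or.inr ⟨hig e, le_rfl⟩⟩
    intro e
    exact (Finset.sum_eq_sum_iff_of_le (fun e _ => h1 e)).1
      ((Equiv.sum_comp (bf L αp) (bq L)).trans (Equiv.sum_comp (bg αm) (bq L)).symm) e
      (Finset.mem_univ e)
  -- the rearrangement step
  let ε : KVar K r0 r1 ≃ Fin (Fintype.card (KVar K r0 r1)) := Fintype.equivFin _
  let V : Fin r0 × Fin cm → ℕ := fun e => (ε (bV L 1 1 e)).val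
  have hVeq : ∀ e e', V e = V e' ↔ (bi L e = bi L e' ∧ bq L e = bq L e' ∧ bp e = bp e') := by
    intro e e'
    simp only [V, Fin.val_inj, ε.injective.eq_iff, bV, Prod.mk.injEq, bi, bq, bp,
      Pi.one_apply, Equiv.Perm.one_apply]
  have hfin : (bf L αp).symm.trans (bg αm) = 1 := by
    apply rearr V bl (bc L)
    · intro e
      rw [hVeq]
      obtain ⟨e, rfl⟩ := (bf L αp).surjective e
      simp only [Equiv.trans_apply, Equiv.symm_apply_apply]
      exact ⟨(hig e).trans (hif e).symm, (hq e).symm, hp e⟩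
    · intro e e' h1 h2
      rw [hVeq] at h1
      exact hM.inj e e' h2 h1.2.2
    · intro e e' h1 h2
      rw [hVeq] at h1
      have h3 : e.1 = e'.1 := Fin.ext h1.2.2
      have := hss.2.2 e.1 e.2 e'.2 (by
        have t1 := Tm_eq L e
        have t2 := Tm_eq L e'
        have t3 : (L.Tm e.1 e.2).1 = (L.Tm e'.1 e'.2).1 := Fin.ext h1.1
        have t4 : (L.link e).1 = (L.link e').1 := Fin.ext h1.2.1
        rw [t3, t4] at t1
        rw [t1]
        rw [h3]
        exact t2.symm) h2
      have h5 : (e.1, e'.2) = e' := by rw [h3]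
      rw [h5] at this
      exact this
    · rw [← Equiv.sum_comp (bf L αp)]
      simp only [Equiv.trans_apply, Equiv.symm_apply_apply, bl_bg, bc_bf]
  ext1 e
  have := congrArg (fun φ : Equiv.Perm _ => φ (bf L αp e)) hfin
  simp only [Equiv.trans_apply, Equiv.symm_apply_apply, Equiv.Perm.one_apply] at this
  exact this.symm

lemma sign_eq_one (αm : Fin cm → Equiv.Perm (Fin r0))
    (αp : Fin cp → Equiv.Perm (Fin r1)) (h : bf L αp = bg αm) :
    ((∏ l, (Equiv.Perm.sign (αm l) : ℤ)) * ∏ c, (Equiv.Perm.sign (αp c) : ℤ)) = 1 := by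
  have h1 : Equiv.Perm.sign (bg αm) = ∏ l, Equiv.Perm.sign (αm l) :=
    Equiv.Perm.sign_prodCongrLeft αm
  have h2 : Equiv.Perm.sign (bf L αp) = ∏ l, Equiv.Perm.sign (αp l) := by
    rw [← Equiv.Perm.sign_prodCongrLeft αp]
    apply Equiv.Perm.sign_eq_sign_of_equiv _ _ L.link
    intro e
    simp [bf]
  rw [h, h1] at h2
  have h3 : (∏ l, Equiv.Perm.sign (αm l)) * ∏ c, Equiv.Perm.sign (αp c) = 1 := by
    rw [h2]; exact Int.units_mul_self _
  have := congrArg (fun u : ℤˣ => (u : ℤ)) h3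
  simpa using this

/-- exponent vector of a term -/
noncomputable def bX (V : Fin r0 × Fin cm → KVar K r0 r1) : KVar K r0 r1 →₀ ℕ :=
  ∑ e, Finsupp.single (V e) 1

lemma bX_apply (V : Fin r0 × Fin cm → KVar K r0 r1) (v : KVar K r0 r1) :
    bX V v = cnt V v := by
  simp [bX, cnt, Finsupp.finsetSum_apply, Finsupp.single_apply]

lemma pairPoly_eq : pairPoly L = ∑ αm : Fin cm → Equiv.Perm (Fin r0),
    ∑ αp : Fin cp → Equiv.Perm (Fin r1),
    ((∏ l, (Equiv.Perm.sign (αm l) : ℤ)) * ∏ c, (Equiv.Perm.sign (αp c) : ℤ)) •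
      MvPolynomial.monomial (bX (bV L αm αp)) (1 : ℂ) := by
  unfold pairPoly
  refine Finset.sum_congr rfl fun αm _ => Finset.sum_congr rfl fun αp _ => ?_
  congr 1
  rw [← Fintype.prod_prod_type' (f := fun p l => (MvPolynomial.X
          ((L.Tm p l).1, αp (L.link (p, l)).2 (L.link (p, l)).1, αm l p) : KPoly K r0 r1)),
    bX, MvPolynomial.monomial_sum_one]
  rfl

lemma coeff_pairPoly (m : KVar K r0 r1 →₀ ℕ) : (pairPoly L).coeff m =
    ∑ αm : Fin cm → Equiv.Perm (Fin r0), ∑ αp : Fin cp → Equiv.Perm (Fin r1),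
    ((∏ l, (Equiv.Perm.sign (αm l) : ℤ)) * ∏ c, (Equiv.Perm.sign (αp c) : ℤ)) •
      (if bX (bV L αm αp) = m then (1 : ℂ) else 0) := by
  classical
  rw [pairPoly_eq]
  simp only [MvPolynomial.coeff_sum]
  refine Finset.sum_congr rfl fun αm _ => Finset.sum_congr rfl fun αp _ => ?_
  rw [← MvPolynomial.coeff_monomial]
  exact map_zsmul (MvPolynomial.lcoeff ℂ m).toAddMonoidHom _ _

lemma monExpM_eq : monExpM L = bX (bV L 1 1) := by
  unfold monExpM bX
  rw [← Fintype.sum_prod_type' (f := fun p c =>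
    (Finsupp.single ((L.Tm p c).1, (L.Tm p c).2, p) 1 : KVar K r0 r1 →₀ ℕ))]
  refine Finset.sum_congr rfl fun e _ => ?_
  simp only [bV, Pi.one_apply, Equiv.Perm.one_apply]
  rw [L.link_row e.1 e.2]

lemma monExpP_eq : monExpP L = bX (bV L 1 1) := by
  unfold monExpP bX
  rw [← Fintype.sum_prod_type' (f := fun q c =>
    (Finsupp.single ((L.Tp q c).1, q, (L.Tp q c).2) 1 : KVar K r0 r1 →₀ ℕ)),
    ← Equiv.sum_comp L.link]
  refine Finset.sum_congr rfl fun e _ => ?_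
  simp only [bV, Pi.one_apply, Equiv.Perm.one_apply]
  rw [Tp_link]

lemma varGT_iff (v w : KVar K r0 r1) : VarGT v w ↔
    toLex (v.1, toLex (v.2.1, v.2.2)) < toLex (w.1, toLex (w.2.1, w.2.2)) := by
  simp [VarGT, Prod.Lex.toLex_lt_toLex]

end main

/-- The semi-invariant attached to a semi-standard linked
tableaux pair is nonzero, and its leading monomiaL is `Mon(T⁺) = Mon(T⁻)`. -/
theorem statement9 (K r0 r1 cm cp : ℕ) (hK : 1 ≤ K) (h0 : 1 ≤ r0) (h1 : 1 ≤ r1)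
    (L : LinkedPair K r0 r1 cm cp) (hss : IsSemiStandardPair L) :
    pairPoly L ≠ 0 ∧ monExpP L = monExpM L ∧
      IsLM (pairPoly L) (monExpP L) := by
  have hmem : monExpP L ∈ (pairPoly L).support := by
    rw [MvPolynomial.mem_support_iff, coeff_pairPoly, monExpP_eq]
    have hterm : ∀ (αm : Fin cm → Equiv.Perm (Fin r0)) (αp : Fin cp → Equiv.Perm (Fin r1)),
        ((∏ l, (Equiv.Perm.sign (αm l) : ℤ)) * ∏ c, (Equiv.Perm.sign (αp c) : ℤ)) •
        (if bX (bV L αm αp) = bX (bV L 1 1) then (1 : ℂ) else 0) =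
        ((if bX (bV L αm αp) = bX (bV L 1 1) then 1 else 0 : ℕ) : ℂ) := by
      intro αm αp
      split_ifs with h
      · rw [sign_eq_one L αm αp (perm_eq L hss αm αp fun w => by
          rw [← bX_apply, ← bX_apply, h])]
        simp
      · simp
    simp only [hterm]
    rw [Finset.sum_congr rfl fun αm _ => (Nat.cast_sum _ _).symm, ← Nat.cast_sum,
      Nat.cast_ne_zero]
    apply ne_of_gt
    apply Finset.sum_pos' (fun _ _ => Nat.zero_le _)
    refine ⟨1, Finset.mem_univ _, ?_⟩
    apply Finset.sum_pos' (fun _ _ => Nat.zero_le _)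
    exact ⟨1, Finset.mem_univ _, by simp⟩
  refine ⟨?_, ?_, hmem, ?_⟩
  · intro h
    rw [h] at hmem
    simp at hmem
  · rw [monExpP_eq, monExpM_eq]
  · intro m' hm'
    rw [MvPolynomial.mem_support_iff, coeff_pairPoly] at hm'
    obtain ⟨αm, -, h2⟩ := Finset.exists_ne_zero_of_sum_ne_zero hm'
    obtain ⟨αp, -, h3⟩ := Finset.exists_ne_zero_of_sum_ne_zero h2
    have h4 : bX (bV L αm αp) = m' := by
      by_contra hne
      simp [hne] at h3
    rw [monExpP_eq]
    by_cases heq : m' = bX (bV L 1 1)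
    · exact Or.inl heq
    · right
      have hne : (Finset.univ.filter fun v => m' v ≠ bX (bV L 1 1) v).Nonempty := by
        by_contra hemp
        rw [Finset.not_nonempty_iff_eq_empty, Finset.filter_eq_empty_iff] at hemp
        apply heq
        ext v
        simpa using hemp (Finset.mem_univ v)
      obtain ⟨v, hv, hmin⟩ := Finset.exists_min_image _
        (fun v : KVar K r0 r1 => toLex (v.1, toLex (v.2.1, v.2.2))) hne
      have hless : ∀ w, VarGT w v → m' w = bX (bV L 1 1) w := by
        intro w hw
        by_contra hcon
        have := hmin w (by simp [hcon])
        rw [varGT_iff] at hw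
        exact absurd hw (not_lt.2 this)
      refine ⟨v, ?_, hless⟩
      simp only [Finset.mem_filter, Finset.mem_univ, true_and] at hv
      refine lt_of_le_of_ne ?_ hv
      subst h4
      simp only [bX_apply] at hless ⊢
      exact first_diff L hss αm αp v hless

end QuiverSAGBI
end
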